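/- arXiv:1110.5627 — 2 statements merged into one kernel-verified Lean document; each statement's English description precedes it below -/
import Mathlib

section
/- Let g be a finite-dimensional real Lie algebra with a norm. The quotient group P(g)/P(g)₀, equipped with the quotient topology induced from the supremum-norm topology on P(g) = C([0,1], g), is a simply connected topological group. -/
/-- `IsLieBracket B` says that the bilinear map `B = ⁅·,·⁆` makes the
(finite-dimensional, normed) real vector space `g` into a real Lie algebra:
it is alternating and satisfies the Jacobi identity (in Leibniz form). -/
def IsLieBracket {g : Type*} [NormedAddCommGroup g] [NormedSpace ℝ g]
    (B : g →ₗ[ℝ] g →ₗ[ℝ] g) : Prop :=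
  (∀ x : g, B x x = 0) ∧
  (∀ x y z : g, B x (B y z) = B (B x y) z + B y (B x z))

/-- The adjoint endomorphism `ad x = ⁅x, ·⁆` as a continuous linear map. -/
noncomputable def adL {g : Type*} [NormedAddCommGroup g] [NormedSpace ℝ g]
    [FiniteDimensional ℝ g] (B : g →ₗ[ℝ] g →ₗ[ℝ] g) (x : g) : g →L[ℝ] g :=
  LinearMap.toContinuousLinearMap (B x)

/-- `IsTransport B γ A` says that `A : [0,1] → End(g)` is a continuously
differentiable path of linear endomorphisms of `g` with `A 0 = id` and
`A' t = ad (γ t) ∘ A t` for `t ∈ [0,1]` (one-sided derivatives at the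
endpoints, and the derivative is continuous on `[0,1]`). -/
def IsTransport {g : Type*} [NormedAddCommGroup g] [NormedSpace ℝ g]
    [FiniteDimensional ℝ g] (B : g →ₗ[ℝ] g →ₗ[ℝ] g)
    (γ : ℝ → g) (A : ℝ → (g →L[ℝ] g)) : Prop :=
  A 0 = 1 ∧
  (∀ t ∈ Set.Icc (0:ℝ) 1,
    HasDerivWithinAt A ((adL B (γ t)).comp (A t)) (Set.Icc (0:ℝ) 1) t) ∧
  ContinuousOn (fun t => (adL B (γ t)).comp (A t)) (Set.Icc (0:ℝ) 1)

/-- The path `A_γ : [0,1] → End(g)`, i.e. the unique continuously differentiable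
solution of `A 0 = id`, `A' t = ad (γ t) ∘ A t` (chosen via choice; for a
continuous path `γ` it exists and is unique on `[0,1]`). -/
noncomputable def transport {g : Type*} [NormedAddCommGroup g] [NormedSpace ℝ g]
    [FiniteDimensional ℝ g] (B : g →ₗ[ℝ] g →ₗ[ℝ] g) (γ : ℝ → g) :
    ℝ → (g →L[ℝ] g) :=
  letI := Classical.propDecidable (∃ A : ℝ → (g →L[ℝ] g), IsTransport B γ A)
  if h : ∃ A : ℝ → (g →L[ℝ] g), IsTransport B γ A then h.choose else fun _ => 1

/-- Extension of a continuous path `[0,1] → g` to all of `ℝ` (constant outside `[0,1]`). -/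
noncomputable def pathExt {g : Type*} [TopologicalSpace g]
    (γ : C(Set.Icc (0:ℝ) 1, g)) : ℝ → g :=
  Set.IccExtend zero_le_one ⇑γ

/-- The Duistermaat–Kolk multiplication of paths: `(γ · δ)(t) = γ t + A_γ(t) (δ t)`,
as a `g`-valued function on `[0,1]`. -/
noncomputable def pathMul {g : Type*} [NormedAddCommGroup g] [NormedSpace ℝ g]
    [FiniteDimensional ℝ g] (B : g →ₗ[ℝ] g →ₗ[ℝ] g)
    (γ δ : C(Set.Icc (0:ℝ) 1, g)) : Set.Icc (0:ℝ) 1 → g :=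
  fun t => γ t + transport B (pathExt γ) t (δ t)

/-- The Duistermaat–Kolk inversion of paths: `ι(γ)(t) = -A_γ(t)⁻¹ (γ t)`,
as a `g`-valued function on `[0,1]`. -/
noncomputable def pathInv {g : Type*} [NormedAddCommGroup g] [NormedSpace ℝ g]
    [FiniteDimensional ℝ g] (B : g →ₗ[ℝ] g →ₗ[ℝ] g)
    (γ : C(Set.Icc (0:ℝ) 1, g)) : Set.Icc (0:ℝ) 1 → g :=
  fun t => -(Ring.inverse (transport B (pathExt γ) t) (γ t))

/-- `InPathZero B γ` says that `γ` belongs to the subset `P(g)₀` of the path group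
`P(g) = C([0,1], g)`: there is a continuously differentiable family
`Γ : [0,1] → P(g)` (with derivative `Γ'`) joining the constant path `0` to `γ`
such that `∫₀¹ A_{Γ s}(t)⁻¹ (Γ' s (t)) dt = 0` for all `s ∈ [0,1]`. -/
noncomputable def InPathZero {g : Type*} [NormedAddCommGroup g] [NormedSpace ℝ g]
    [FiniteDimensional ℝ g] (B : g →ₗ[ℝ] g →ₗ[ℝ] g)
    (γ : C(Set.Icc (0:ℝ) 1, g)) : Prop :=
  ∃ Γ Γ' : ℝ → C(Set.Icc (0:ℝ) 1, g),
    (∀ s ∈ Set.Icc (0:ℝ) 1, HasDerivWithinAt Γ (Γ' s) (Set.Icc (0:ℝ) 1) s) ∧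
    ContinuousOn Γ' (Set.Icc (0:ℝ) 1) ∧
    Γ 0 = 0 ∧ Γ 1 = γ ∧
    ∀ s ∈ Set.Icc (0:ℝ) 1,
      (∫ t in (0:ℝ)..1,
        Ring.inverse (transport B (pathExt (Γ s)) t) (pathExt (Γ' s) t)) = 0

/-- The coset relation of the subgroup `P(g)₀` on the path group
`P(g) = C([0,1], g)`: `γ ∼ δ` iff `γ · ι(δ) ∈ P(g)₀`. -/
noncomputable def pathRel {g : Type*} [NormedAddCommGroup g] [NormedSpace ℝ g]
    [FiniteDimensional ℝ g] (B : g →ₗ[ℝ] g →ₗ[ℝ] g)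
    (γ δ : C(Set.Icc (0:ℝ) 1, g)) : Prop :=
  ∃ ι m : C(Set.Icc (0:ℝ) 1, g),
    (∀ t, ι t = pathInv B δ t) ∧ (∀ t, m t = pathMul B γ ι t) ∧ InPathZero B m

/-!
The path group `P(g)` is contractible, as a topological vector space. For a path-connected normal
subgroup `N` of a simply connected topological group `G`, the quotient `G ⧸ N` is homotopy
equivalent to `G ⧸ closure N`, since the map between them induces the topology of `G ⧸ N`; and
`G ⧸ closure N` is simply connected as soon as `closure N` is path-connected and the projection
from `G` has a continuous local section, so that loops lift to paths of `G` with both ends in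
`closure N`.

Both properties of `N = P(g)₀` follow from a slice by constant paths. Solving an ordinary
differential equation in `g` corrects the curve `s ↦ s • γ` by constant paths to a horizontal one:
every `γ` close to `0` lies in `P(g)₀` up to a small constant path. Differentiating `A_γ(1)` along
horizontal curves shows that it is trivial on `closure P(g)₀`. Hence two small constant paths
`x` and `y` with the same class modulo `closure P(g)₀` satisfy `exp (ad x) = exp (ad y)`, that is,
`ad x = ad y`. They differ by an element of a closed subgroup of the centre of `g`, and such a
subgroup is a linear subspace near `0`: a complement of this subspace provides the local section,
and the subspace itself connects a small constant path in `closure P(g)₀` to `0`.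
-/

section Topology

open Topology ContinuousMap

variable {X Y : Type*} [TopologicalSpace X] [TopologicalSpace Y]

/-- A surjection `q : X → Y` inducing the topology of `X` is a homotopy equivalence. Any
set-theoretic section of `q` is a homotopy inverse, because every map into `X` lifting a continuous
map to `Y` is continuous. -/
noncomputable def homotopyEquivOfIsInducing {q : X → Y} (hq : IsInducing q)
    (hs : Function.Surjective q) : HomotopyEquiv X Y where
  toFun := ⟨q, hq.continuous⟩
  invFun := ⟨Function.surjInv hs, by
    simpa only [hq.continuous_iff, (Function.rightInverse_surjInv hs).comp_eq_id]
      using continuous_id⟩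
  left_inv := by
    classical
    refine ⟨⟨⟨fun p => if p.1 = 0 then Function.surjInv hs (q p.2) else p.2, ?_⟩, ?_, ?_⟩⟩
    · rw [hq.continuous_iff]
      convert hq.continuous.comp continuous_snd using 1
      ext p
      by_cases hp : p.1 = 0 <;> simp [hp, Function.surjInv_eq hs]
    · simp
    · simp
  right_inv := by
    convert ContinuousMap.Homotopic.refl (ContinuousMap.id Y)
    ext y
    exact Function.surjInv_eq hs y

/-- `f : X → Y` has a continuous right inverse on a neighbourhood of `y`. -/
def HasLocalSectionAt (f : X → Y) (y : Y) : Prop :=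
  ∃ σ : Y → X, ∃ U ∈ 𝓝 y, ContinuousOn σ U ∧ ∀ u ∈ U, f (σ u) = u

theorem HasLocalSectionAt.of_comp {Z : Type*} [TopologicalSpace Z] {f : Y → Z} {h : X → Y} {z : Z}
    (H : HasLocalSectionAt (f ∘ h) z) (hh : Continuous h) : HasLocalSectionAt f z := by
  obtain ⟨σ, U, hU, hσ, hfσ⟩ := H
  exact ⟨h ∘ σ, U, hU, hh.comp_continuousOn hσ, hfσ⟩

variable {G Q : Type*} [Group G] [TopologicalSpace G] [IsTopologicalGroup G]
  [Group Q] [TopologicalSpace Q] [IsTopologicalGroup Q]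

variable (X) in
/-- The continuous maps `X → Q` that factor continuously through `π : G →* Q`. -/
def liftableMaps (π : G →* Q) : Subgroup C(X, Q) where
  carrier := {f | ∃ F : C(X, G), ∀ x, π (F x) = f x}
  one_mem' := ⟨1, fun _ => map_one π⟩
  mul_mem' := by
    rintro _ _ ⟨F, hF⟩ ⟨K, hK⟩
    exact ⟨F * K, fun x => by simp [hF, hK]⟩
  inv_mem' := by
    rintro _ ⟨F, hF⟩
    exact ⟨F⁻¹, fun x => by simp [hF]⟩

theorem const_mem_liftableMaps {π : G →* Q} (hπ : Function.Surjective π) (q : Q) :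
    const X q ∈ liftableMaps X π := by
  obtain ⟨a, rfl⟩ := hπ q
  exact ⟨const X a, fun _ => rfl⟩

variable [CompactSpace X] [LocallyCompactSpace X] {π : G →* Q}

theorem isOpen_liftableMaps (hσ : HasLocalSectionAt π 1) :
    IsOpen (liftableMaps X π : Set C(X, Q)) := by
  obtain ⟨σ, U, hU, hσ, hπσ⟩ := hσ
  refine Subgroup.isOpen_of_mem_nhds _ (g := 1) (Filter.mem_of_superset
    ((ContinuousMap.isOpen_setOfPred_mapsTo isCompact_univ isOpen_interior).mem_nhds
      fun _ _ => mem_interior_iff_mem_nhds.2 hU) fun f hf => ?_)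
  have hfU (x : X) : f x ∈ U := interior_subset (hf (Set.mem_univ x))
  exact ⟨⟨σ ∘ f, hσ.comp_continuous f.continuous hfU⟩, fun x => hπσ _ (hfU x)⟩

theorem mem_liftableMaps_of_homotopic (hσ : HasLocalSectionAt π 1) {f₀ f₁ : C(X, Q)}
    (H : f₀.Homotopic f₁) (h₀ : f₀ ∈ liftableMaps X π) : f₁ ∈ liftableMaps X π := by
  obtain ⟨H⟩ := H
  have hopen := isOpen_liftableMaps (X := X) hσ
  have hclopen : IsClopen (liftableMaps X π : Set C(X, Q)) :=
    ⟨Subgroup.isClosed_of_isOpen _ hopen, hopen⟩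
  have huniv := (hclopen.preimage H.curry.continuous).eq_univ
    ⟨0, by rwa [Set.mem_preimage, Homotopy.curry_zero]⟩
  have h₁ : H.curry 1 ∈ liftableMaps X π := huniv.ge (Set.mem_univ 1)
  rwa [Homotopy.curry_one] at h₁

theorem exists_lift_of_nullhomotopic (hσ : HasLocalSectionAt π 1) (hπ : Function.Surjective π)
    {f : C(X, Q)} (hf : f.Nullhomotopic) : ∃ F : C(X, G), ∀ x, π (F x) = f x := by
  obtain ⟨q, hq⟩ := hf
  exact mem_liftableMaps_of_homotopic hσ hq.symm (const_mem_liftableMaps hπ q)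

theorem simplyConnectedSpace_of_isPathConnected_ker [SimplyConnectedSpace G] (hcont : Continuous π)
    (hπ : Function.Surjective π) (hker : IsPathConnected (π.ker : Set G))
    (hσ : HasLocalSectionAt π 1) : SimplyConnectedSpace Q := by
  rw [simply_connected_iff_loops_nullhomotopic]
  refine ⟨hπ.pathConnectedSpace hcont, fun q l => ?_⟩
  have : ContractibleSpace unitInterval := (convex_Icc 0 1).contractibleSpace ⟨0, by simp⟩
  obtain ⟨L, hL⟩ := exists_lift_of_nullhomotopic hσ hπ
    ((id_nullhomotopic unitInterval).comp_right l.toContinuousMap)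
  replace hL : ∀ s, π (L s) = l s := hL
  have h0 : π (L 0) = q := by rw [hL, l.source]
  have h1 : π (L 1) = q := by rw [hL, l.target]
  obtain ⟨k, hk⟩ := hker.joinedIn 1 (one_mem π.ker) ((L 0)⁻¹ * L 1) (by simp [h0, h1])
  let p₁ : Path (L 0) (L 1) := ⟨L, rfl, rfl⟩
  let p₂ : Path (L 0) (L 1) := ⟨⟨fun s => L 0 * k s, by fun_prop⟩, by simp, by simp⟩
  have hp := ((SimplyConnectedSpace.paths_homotopic p₁ p₂).map ⟨_, hcont⟩).pathCast h0.symm h1.symm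
  convert hp using 1
  · ext s
    exact (hL s).symm
  · ext s
    have : π (k s) = 1 := hk s
    simp [p₂, this, h0]

variable (N : Subgroup G) [N.Normal]

/-- The projection of a topological group `G` onto the largest Hausdorff quotient of `G ⧸ N`. -/
def hausdorffQuotientMap : G →* SeparationQuotient (G ⧸ N) :=
  SeparationQuotient.mkMonoidHom.comp (QuotientGroup.mk' N)

theorem isOpenQuotientMap_hausdorffQuotientMap : IsOpenQuotientMap (hausdorffQuotientMap N) :=
  SeparationQuotient.isOpenQuotientMap_mk.comp QuotientGroup.isOpenQuotientMap_mk

theorem ker_hausdorffQuotientMap : (hausdorffQuotientMap N).ker = N.topologicalClosure := by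
  ext a
  change SeparationQuotient.mk (a : G ⧸ N) = SeparationQuotient.mk 1 ↔ a ∈ closure (N : Set G)
  rw [SeparationQuotient.mk_eq_mk, group_inseparable_iff, div_one, ← Set.mem_preimage,
    QuotientGroup.isOpenMap_coe.preimage_closure_eq_closure_preimage QuotientGroup.continuous_mk,
    ← Set.singleton_one, ← QuotientGroup.mk_one, QuotientGroup.preimage_mk_one]

theorem simplyConnectedSpace_quotient [SimplyConnectedSpace G]
    (hN : IsPathConnected (N.topologicalClosure : Set G))
    (hσ : HasLocalSectionAt (hausdorffQuotientMap N) 1) : SimplyConnectedSpace (G ⧸ N) := by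
  have hπ := isOpenQuotientMap_hausdorffQuotientMap N
  have : SimplyConnectedSpace (SeparationQuotient (G ⧸ N)) :=
    simplyConnectedSpace_of_isPathConnected_ker hπ.continuous hπ.surjective
      (by rwa [ker_hausdorffQuotientMap]) hσ
  exact (homotopyEquivOfIsInducing SeparationQuotient.isInducing_mk
    SeparationQuotient.surjective_mk).simplyConnectedSpace

end Topology

section LocalSection

open Filter Function
open scoped Topology

theorem hasLocalSectionAt_of_isCompact {X Y : Type*} [TopologicalSpace X] [TopologicalSpace Y]
    [T2Space Y] [Nonempty X] {f : X → Y} (hf : Continuous f) {K : Set X} (hK : IsCompact K)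
    (hinj : K.InjOn f) {y : Y} (hy : f '' K ∈ 𝓝 y) : HasLocalSectionAt f y := by
  have hσ : Set.LeftInvOn (invFunOn f K) f K := hinj.leftInvOn_invFunOn
  refine ⟨invFunOn f K, f '' K, hy, continuousOn_iff_isClosed.2 fun t ht => ?_, ?_⟩
  · exact ⟨f '' (t ∩ K), ((hK.inter_left ht).image hf).isClosed, by
      rw [← hσ.image_inter', Set.inter_eq_left.2 (Set.image_mono Set.inter_subset_right)]⟩
  · rintro _ ⟨x, hx, rfl⟩
    rw [hσ hx]

variable {E : Type*} [NormedAddCommGroup E] [NormedSpace ℝ E] {A : AddSubgroup E}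

/-- The largest linear subspace contained in an additive subgroup of a real vector space. -/
def linealitySpace (A : AddSubgroup E) : Submodule ℝ E where
  carrier := {x | ∀ t : ℝ, t • x ∈ A}
  add_mem' hx hy t := by simpa only [smul_add] using A.add_mem (hx t) (hy t)
  zero_mem' t := by simp only [smul_zero, A.zero_mem]
  smul_mem' c x hx t := by simpa only [smul_smul] using hx (t * c)

theorem mem_of_mem_linealitySpace {x : E} (hx : x ∈ linealitySpace A) : x ∈ A := by
  simpa using hx 1

theorem mem_linealitySpace_of_tendsto (hA : IsClosed (A : Set E)) {c : ℕ → E} {u : E}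
    (hcA : ∀ n, c n ∈ A) (hc : Tendsto c atTop (𝓝 0))
    (hu : Tendsto (fun n => ‖c n‖⁻¹ • c n) atTop (𝓝 u)) : u ∈ linealitySpace A := by
  intro t
  have hdiff : Tendsto (fun n => ⌊t / ‖c n‖⌋ • c n - t • (‖c n‖⁻¹ • c n)) atTop (𝓝 0) := by
    refine squeeze_zero_norm (fun n => ?_) (tendsto_norm_zero.comp hc)
    rw [← Int.cast_smul_eq_zsmul ℝ, smul_smul, ← sub_smul, norm_smul, ← div_eq_mul_inv]
    refine mul_le_of_le_one_left (norm_nonneg _) ?_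
    rw [Real.norm_eq_abs, abs_le]
    constructor
    · linarith [Int.lt_floor_add_one (t / ‖c n‖)]
    · linarith [Int.floor_le (t / ‖c n‖)]
  have hlim := hdiff.add (hu.const_smul t)
  simp only [sub_add_cancel, zero_add] at hlim
  exact hA.mem_of_tendsto hlim (Eventually.of_forall fun n => A.zsmul_mem (hcA n) _)

variable [FiniteDimensional ℝ E]

theorem eventually_mem_imp_eq_zero_of_disjoint_linealitySpace (hA : IsClosed (A : Set E))
    {C : Submodule ℝ E} (hC : Disjoint (linealitySpace A) C) :
    ∀ᶠ c in 𝓝 (0 : E), c ∈ C → c ∈ A → c = 0 := by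
  by_contra hcon
  have hfreq : ∃ᶠ c in 𝓝 (0 : E), c ∈ C ∧ c ∈ A ∧ c ≠ 0 := by
    refine (not_eventually.1 hcon).mono fun c hc => ?_
    tauto
  obtain ⟨c, hc, hcCA⟩ := exists_seq_forall_of_frequently hfreq
  have : ProperSpace E := FiniteDimensional.proper ℝ E
  have hsphere (n : ℕ) : ‖c n‖⁻¹ • c n ∈ Metric.sphere (0 : E) 1 := by
    simpa using norm_smul_inv_norm (𝕜 := ℝ) (hcCA n).2.2
  obtain ⟨u, hu, φ, hφ, hφu⟩ := (isCompact_sphere (0 : E) 1).tendsto_subseq hsphere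
  have huC : u ∈ C := C.closed_of_finiteDimensional.mem_of_tendsto hφu
    (Eventually.of_forall fun n => C.smul_mem _ (hcCA _).1)
  have huA : u ∈ linealitySpace A :=
    mem_linealitySpace_of_tendsto hA (fun n => (hcCA (φ n)).2.1) (hc.comp hφ.tendsto_atTop) hφu
  rw [mem_sphere_zero_iff_norm, Submodule.disjoint_def.1 hC u huA huC, norm_zero] at hu
  exact zero_ne_one hu

theorem exists_projection_mod_submodule (W : Submodule ℝ E) :
    ∃ (C : Submodule ℝ E) (p : E →L[ℝ] E), Disjoint W C ∧ ∀ x, p x ∈ C ∧ x - p x ∈ W := by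
  obtain ⟨C, hC⟩ := W.exists_isCompl
  refine ⟨C, LinearMap.toContinuousLinearMap (C.projection W hC.symm), hC.disjoint, fun x =>
    ⟨Submodule.projection_apply_mem hC.symm x, ?_⟩⟩
  have hx := Submodule.projection_add_projection_eq_self hC x
  rw [LinearMap.coe_toContinuousLinearMap', sub_eq_iff_eq_add.2 hx.symm]
  exact Submodule.projection_apply_mem hC x

theorem eventually_mem_imp_mem_linealitySpace (hA : IsClosed (A : Set E)) :
    ∀ᶠ x in 𝓝 (0 : E), x ∈ A → x ∈ linealitySpace A := by
  obtain ⟨C, p, hC, hp⟩ := exists_projection_mod_submodule (linealitySpace A)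
  have hlim : Tendsto p (𝓝 0) (𝓝 0) := by simpa using p.continuous.tendsto 0
  filter_upwards [hlim.eventually
    (eventually_mem_imp_eq_zero_of_disjoint_linealitySpace hA hC)] with x hx hxA
  have hpx : p x ∈ A := by
    simpa using A.sub_mem hxA (mem_of_mem_linealitySpace (hp x).2)
  simpa [hx (hp x).1 hpx] using (hp x).2

theorem hasLocalSectionAt_of_addSubgroup {Q : Type*} [TopologicalSpace Q] [T2Space Q] {f : E → Q}
    (hf : Continuous f) (hA : IsClosed (A : Set E)) (hfA : ∀ z ∈ A, ∀ x, f (z + x) = f x)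
    (hinj : ∀ᶠ p in 𝓝 (0 : E × E), f p.1 = f p.2 → p.1 - p.2 ∈ A)
    (hopen : 𝓝 (f 0) ≤ map f (𝓝 0)) : HasLocalSectionAt f (f 0) := by
  obtain ⟨C, π, hC, hπ⟩ := exists_projection_mod_submodule (linealitySpace A)
  have hfπ (x : E) : f (π x) = f x := by
    rw [← hfA _ (mem_of_mem_linealitySpace (hπ x).2) (π x), sub_add_cancel]
  have hdiff : ∀ᶠ p in 𝓝 (0 : E × E), p.1 ∈ C → p.2 ∈ C → f p.1 = f p.2 → p.1 = p.2 := by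
    have hsub : Tendsto (fun p : E × E => p.1 - p.2) (𝓝 0) (𝓝 0) := by
      have : Continuous fun p : E × E => p.1 - p.2 := by fun_prop
      simpa using this.tendsto 0
    filter_upwards [hinj, hsub.eventually
      (eventually_mem_imp_eq_zero_of_disjoint_linealitySpace hA hC)] with p hp hp' h₁ h₂ h
    exact sub_eq_zero.1 (hp' (C.sub_mem h₁ h₂) (hp h))
  rw [← Prod.mk_zero_zero, nhds_prod_eq, eventually_prod_self_iff
    (r := fun x y : E => x ∈ C → y ∈ C → f x = f y → x = y)] at hdiff
  obtain ⟨V, hV, hVinj⟩ := hdiff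
  have : ProperSpace E := FiniteDimensional.proper ℝ E
  obtain ⟨K, hK, hKV, hKc⟩ := local_compact_nhds hV
  refine hasLocalSectionAt_of_isCompact hf (hKc.inter_left C.closed_of_finiteDimensional)
    (fun x hx y hy => hVinj _ (hKV hx.2) _ (hKV hy.2) hx.1 hy.1) ?_
  have hπK : π ⁻¹' K ∈ 𝓝 0 := π.continuous.continuousAt.preimage_mem_nhds (by rwa [map_zero])
  refine mem_of_superset (hopen (image_mem_map hπK)) ?_
  rintro _ ⟨x, hx, rfl⟩
  exact ⟨π x, ⟨(hπ x).1, hx⟩, hfπ x⟩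

end LocalSection

local notation "𝕀" => Set.Icc (0 : ℝ) 1

section PathCalculus

open ContinuousMap Filter
open scoped Topology NNReal

theorem continuous_pathExt {X : Type*} [TopologicalSpace X] (f : C(𝕀, X)) :
    Continuous (pathExt f) :=
  f.continuous.Icc_extend'

theorem pathExt_of_mem {X : Type*} [TopologicalSpace X] (f : C(𝕀, X)) {t : ℝ} (ht : t ∈ 𝕀) :
    pathExt f t = f ⟨t, ht⟩ :=
  Set.IccExtend_of_mem _ _ ht

@[simp] theorem pathExt_coe {X : Type*} [TopologicalSpace X] (f : C(𝕀, X)) (t : 𝕀) :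
    pathExt f t = f t :=
  pathExt_of_mem f t.2

variable {E F G : Type*} [NormedAddCommGroup E] [NormedSpace ℝ E] [NormedAddCommGroup F]
  [NormedSpace ℝ F] [NormedAddCommGroup G] [NormedSpace ℝ G]

/-- `HasPathDeriv f f'` says that the path `f` is differentiable on `[0,1]`, with one-sided
derivatives at the endpoints, and that its derivative is the continuous path `f'`. -/
def HasPathDeriv (f f' : C(𝕀, E)) : Prop :=
  ∀ t : 𝕀, HasDerivWithinAt (pathExt f) (f' t) 𝕀 t

theorem hasPathDeriv_const (x : E) : HasPathDeriv (const 𝕀 x) 0 :=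
  fun t => hasDerivWithinAt_const (t : ℝ) 𝕀 x

theorem HasPathDeriv.sub {f f' h h' : C(𝕀, E)} (hf : HasPathDeriv f f') (hh : HasPathDeriv h h') :
    HasPathDeriv (f - h) (f' - h') :=
  fun t => (hf t).sub (hh t)

/-- The pointwise action of a continuous bilinear map on continuous paths. -/
noncomputable def pointwiseBilin (L : E →L[ℝ] F →L[ℝ] G) :
    C(𝕀, E) →L[ℝ] C(𝕀, F) →L[ℝ] C(𝕀, G) :=
  LinearMap.mkContinuous₂
    (LinearMap.mk₂ ℝ (fun (f : C(𝕀, E)) (h : C(𝕀, F)) =>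
        (⟨fun t => L (f t) (h t), by fun_prop⟩ : C(𝕀, G)))
      (by intros; ext; simp) (by intros; ext; simp) (by intros; ext; simp) (by intros; ext; simp))
    ‖L‖ fun f h => (ContinuousMap.norm_le _ (by positivity)).2 fun t => by
      refine (L.le_opNorm₂ _ _).trans ?_
      gcongr
      · exact f.norm_coe_le_norm _
      · exact h.norm_coe_le_norm _

theorem hasDerivWithinAt_eval {S : Set ℝ} {s : ℝ} {f : ℝ → C(𝕀, E)} {f' : C(𝕀, E)}
    (hf : HasDerivWithinAt f f' S s) (t : 𝕀) : HasDerivWithinAt (fun s => f s t) (f' t) S s :=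
  (evalCLM ℝ t : C(𝕀, E) →L[ℝ] E).hasFDerivAt.comp_hasDerivWithinAt s hf

theorem hasDerivWithinAt_pointwiseBilin (L : E →L[ℝ] F →L[ℝ] G) {S : Set ℝ} {s : ℝ}
    {f : ℝ → C(𝕀, E)} {h : ℝ → C(𝕀, F)} {f' : C(𝕀, E)} {h' : C(𝕀, F)}
    (hf : HasDerivWithinAt f f' S s) (hh : HasDerivWithinAt h h' S s) :
    HasDerivWithinAt (fun s => pointwiseBilin L (f s) (h s))
      (pointwiseBilin L (f s) h' + pointwiseBilin L f' (h s)) S s :=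
  (pointwiseBilin L).hasDerivWithinAt_of_bilinear hf hh

theorem HasPathDeriv.map (L : E →L[ℝ] F) {f f' : C(𝕀, E)} (hf : HasPathDeriv f f') :
    HasPathDeriv (L.compLeftContinuous ℝ 𝕀 f) (L.compLeftContinuous ℝ 𝕀 f') :=
  fun t => L.hasFDerivAt.comp_hasDerivWithinAt (t : ℝ) (hf t)

theorem HasPathDeriv.bilin (L : E →L[ℝ] F →L[ℝ] G) {f f' : C(𝕀, E)} {h h' : C(𝕀, F)}
    (hf : HasPathDeriv f f') (hh : HasPathDeriv h h') :
    HasPathDeriv (pointwiseBilin L f h) (pointwiseBilin L f h' + pointwiseBilin L f' h) := by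
  intro t
  have h := L.hasDerivWithinAt_of_bilinear (hf t) (hh t)
  simp only [pathExt_coe] at h
  exact h

variable [CompleteSpace E]

theorem hasDerivAt_integral_pathExt (f : C(𝕀, E)) (t : ℝ) :
    HasDerivAt (fun t => ∫ u in (0 : ℝ)..t, pathExt f u) (pathExt f t) t :=
  (continuous_pathExt f).integral_hasStrictDerivAt 0 t |>.hasDerivAt

/-- The integration operator `f ↦ (t ↦ ∫₀ᵗ f)` on continuous paths. -/
noncomputable def primitive : C(𝕀, E) →L[ℝ] C(𝕀, E) :=
  LinearMap.mkContinuous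
    { toFun := fun f => ⟨fun t => ∫ u in (0 : ℝ)..t, pathExt f u,
        (continuous_iff_continuousAt.2 fun t =>
          (hasDerivAt_integral_pathExt f t).continuousAt).comp continuous_subtype_val⟩
      map_add' := fun f h => ext fun t => intervalIntegral.integral_add
        ((continuous_pathExt f).intervalIntegrable _ _)
        ((continuous_pathExt h).intervalIntegrable _ _)
      map_smul' := fun c f => ext fun t => intervalIntegral.integral_smul c (pathExt f) } 1
    fun f => by
      refine (ContinuousMap.norm_le _ (by positivity)).2 fun t => ?_
      refine (intervalIntegral.norm_integral_le_of_norm_le_const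
        fun u _ => f.norm_coe_le_norm _).trans ?_
      rw [mul_comm, sub_zero, abs_of_nonneg t.2.1]
      gcongr
      exact t.2.2

@[simp] theorem primitive_apply_zero (f : C(𝕀, E)) : primitive f 0 = 0 :=
  intervalIntegral.integral_same

theorem hasPathDeriv_primitive (f : C(𝕀, E)) : HasPathDeriv (primitive f) f := by
  intro t
  rw [← pathExt_coe f t]
  exact (hasDerivAt_integral_pathExt f t).hasDerivWithinAt.congr
    (fun s hs => pathExt_of_mem _ hs) (pathExt_coe _ t)

theorem HasPathDeriv.eq_const_add_primitive {f f' : C(𝕀, E)} (hf : HasPathDeriv f f') :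
    f = const 𝕀 (f 0) + primitive f' := by
  have hconst : ∀ t ∈ 𝕀, pathExt (f - primitive f') t = pathExt (f - primitive f') 0 :=
    constant_of_derivWithin_zero
      (fun t ht => ((hf.sub (hasPathDeriv_primitive f')) ⟨t, ht⟩).differentiableWithinAt)
      (fun t ht => by
        have h := (hf.sub (hasPathDeriv_primitive f')) ⟨t, Set.Ico_subset_Icc_self ht⟩
        rw [sub_self] at h
        exact h.derivWithin (uniqueDiffOn_Icc zero_lt_one t (Set.Ico_subset_Icc_self ht)))
  ext t
  have ht := hconst t t.2
  rw [pathExt_coe, pathExt_of_mem _ (Set.left_mem_Icc.2 zero_le_one)] at ht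
  have h0 : (f - primitive f') 0 = f 0 := by simp
  exact sub_eq_iff_eq_add.1 (ht.trans h0)

theorem hasPathDeriv_const_add_primitive (x : E) (f : C(𝕀, E)) :
    HasPathDeriv (const 𝕀 x + primitive f) f :=
  fun t => (hasPathDeriv_primitive f t).const_add x

theorem HasPathDeriv.eq_const {f : C(𝕀, E)} (hf : HasPathDeriv f 0) : f = const 𝕀 (f 0) := by
  simpa using hf.eq_const_add_primitive

variable {M : C(𝕀, E) →L[ℝ] C(𝕀, E)} {c : ℝ≥0}

theorem norm_primitive_comp_pow_apply_le (hM : ∀ f t, ‖M f t‖ ≤ c * ‖f t‖) (n : ℕ) (f : C(𝕀, E))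
    (t : 𝕀) : ‖((primitive ∘L M) ^ n) f t‖ ≤ c ^ n * (t : ℝ) ^ n / n.factorial * ‖f‖ := by
  induction n generalizing t with
  | zero => simpa using f.norm_coe_le_norm t
  | succ n ih =>
    have hn : (n : ℝ) + 1 ≠ 0 := by positivity
    set h := ((primitive ∘L M) ^ n) f
    calc ‖((primitive ∘L M) ^ (n + 1)) f t‖ = ‖∫ u in (0 : ℝ)..t, pathExt (M h) u‖ := by
          rw [pow_succ']; rfl
      _ ≤ ∫ u in (0 : ℝ)..t, (c * c ^ n / n.factorial * ‖f‖) * u ^ n := by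
          refine intervalIntegral.norm_integral_le_of_norm_le t.2.1
            (Eventually.of_forall fun u hu => ?_)
            (Continuous.intervalIntegrable (by fun_prop) _ _)
          have hu' : u ∈ 𝕀 := ⟨hu.1.le, hu.2.trans t.2.2⟩
          rw [pathExt_of_mem _ hu']
          calc ‖M h ⟨u, hu'⟩‖ ≤ c * (c ^ n * u ^ n / n.factorial * ‖f‖) :=
                (hM _ _).trans (by gcongr; exact ih ⟨u, hu'⟩)
            _ = _ := by ring
      _ = c ^ (n + 1) * (t : ℝ) ^ (n + 1) / (n + 1).factorial * ‖f‖ := by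
          rw [intervalIntegral.integral_const_mul, integral_pow, Nat.factorial_succ]
          push_cast
          field_simp
          ring

theorem isUnit_one_sub_primitive_comp (hM : ∀ f t, ‖M f t‖ ≤ c * ‖f t‖) :
    IsUnit (1 - primitive ∘L M) := by
  have hlim := FloorSemiring.tendsto_pow_div_factorial_atTop (c : ℝ)
  obtain ⟨n, hn⟩ := (hlim.eventually (gt_mem_nhds zero_lt_one)).exists
  have hpow : ‖(primitive ∘L M) ^ n‖ < 1 := by
    refine (ContinuousLinearMap.opNorm_le_bound _ (by positivity) fun f =>
      (ContinuousMap.norm_le _ (by positivity)).2 fun t => ?_).trans_lt hn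
    refine (norm_primitive_comp_pow_apply_le hM n f t).trans ?_
    gcongr
    exact mul_le_of_le_one_right (by positivity) (pow_le_one₀ t.2.1 t.2.2)
  have hunit := isUnit_one_sub_of_norm_lt_one (R := C(𝕀, E) →L[ℝ] C(𝕀, E)) hpow
  rw [← mul_neg_geom_sum] at hunit
  refine ((Commute.isUnit_mul_iff (Commute.sum_right _ _ _ fun i _ => ?_)).1 hunit).1
  exact ((Commute.one_left _).sub_left (Commute.refl _)).pow_right i

theorem HasPathDeriv.eq_zero (hM : ∀ f t, ‖M f t‖ ≤ c * ‖f t‖) {f : C(𝕀, E)}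
    (hf : HasPathDeriv f (M f)) (h0 : f 0 = 0) : f = 0 := by
  obtain ⟨u, hu⟩ := isUnit_one_sub_primitive_comp hM
  have hu0 : (u : C(𝕀, E) →L[ℝ] C(𝕀, E)) f = 0 := by
    have hf' := hf.eq_const_add_primitive
    rw [h0] at hf'
    rw [hu]
    exact sub_eq_zero.2 (by simpa [ContinuousMap.ext_iff] using hf')
  have := congrArg (↑u⁻¹ : C(𝕀, E) →L[ℝ] C(𝕀, E)) hu0
  rwa [map_zero, ← mul_apply_eq_comp, Units.inv_mul] at this

/-- The solution `f` of the linear differential equation `f' = M f` with `f 0 = x`, provided that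
`M` is pointwise bounded. -/
noncomputable def linearFlow (M : C(𝕀, E) →L[ℝ] C(𝕀, E)) (x : E) : C(𝕀, E) :=
  Ring.inverse (1 - primitive ∘L M) (const 𝕀 x)

theorem linearFlow_eq (hM : ∀ f t, ‖M f t‖ ≤ c * ‖f t‖) (x : E) :
    linearFlow M x = const 𝕀 x + primitive (M (linearFlow M x)) := by
  have h := congrArg (fun T : C(𝕀, E) →L[ℝ] C(𝕀, E) => T (const 𝕀 x))
    (Ring.mul_inverse_cancel _ (isUnit_one_sub_primitive_comp hM))
  exact sub_eq_iff_eq_add.1 h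

theorem linearFlow_apply_zero (hM : ∀ f t, ‖M f t‖ ≤ c * ‖f t‖) (x : E) :
    linearFlow M x 0 = x := by
  rw [linearFlow_eq hM]
  simp

theorem hasPathDeriv_linearFlow (hM : ∀ f t, ‖M f t‖ ≤ c * ‖f t‖) (x : E) :
    HasPathDeriv (linearFlow M x) (M (linearFlow M x)) := by
  have h := hasPathDeriv_const_add_primitive x (M (linearFlow M x))
  rwa [← linearFlow_eq hM] at h

theorem contDiffAt_linearFlow (hM : ∀ f t, ‖M f t‖ ≤ c * ‖f t‖) (x : E) {n : WithTop ℕ∞} :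
    ContDiffAt ℝ n (fun M : C(𝕀, E) →L[ℝ] C(𝕀, E) => linearFlow M x) M := by
  obtain ⟨u, hu⟩ := isUnit_one_sub_primitive_comp hM
  have hinv := contDiffAt_ringInverse ℝ (n := n) (R := C(𝕀, E) →L[ℝ] C(𝕀, E)) u
  rw [hu] at hinv
  have hsub : ContDiff ℝ n fun M : C(𝕀, E) →L[ℝ] C(𝕀, E) => 1 - primitive ∘L M := by fun_prop
  exact (hinv.comp M hsub.contDiffAt).clm_apply contDiffAt_const

end PathCalculus

section Evolution

open ContinuousMap
open scoped NNReal

variable {𝔸 : Type*} [NormedRing 𝔸] [NormedAlgebra ℝ 𝔸]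

theorem norm_mul_apply_le (a f : C(𝕀, 𝔸)) (t : 𝕀) :
    ‖ContinuousLinearMap.mul ℝ C(𝕀, 𝔸) a f t‖ ≤ ‖a‖₊ * ‖f t‖ :=
  (norm_mul_le (a t) (f t)).trans (by gcongr; exact a.norm_coe_le_norm t)

theorem norm_neg_flip_mul_apply_le (a f : C(𝕀, 𝔸)) (t : 𝕀) :
    ‖(-(ContinuousLinearMap.mul ℝ C(𝕀, 𝔸)).flip a) f t‖ ≤ ‖a‖₊ * ‖f t‖ := by
  refine (norm_neg (f t * a t)).trans_le ((norm_mul_le _ _).trans ?_)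
  rw [mul_comm]
  gcongr
  exact a.norm_coe_le_norm t

theorem HasPathDeriv.mul {f f' h h' : C(𝕀, 𝔸)} (hf : HasPathDeriv f f')
    (hh : HasPathDeriv h h') : HasPathDeriv (f * h) (f' * h + f * h') := by
  intro t
  have hmul := (hf t).mul (hh t)
  simp only [pathExt_coe] at hmul
  exact hmul

variable [CompleteSpace 𝔸]

theorem linearFlow_mul_mul_linearFlow_neg_flip_mul (a : C(𝕀, 𝔸)) :
    linearFlow (ContinuousLinearMap.mul ℝ _ a) 1 *
      linearFlow (-(ContinuousLinearMap.mul ℝ _).flip a) 1 = 1 := by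
  set U := linearFlow (ContinuousLinearMap.mul ℝ _ a) 1
  set V := linearFlow (-(ContinuousLinearMap.mul ℝ _).flip a) 1
  let M := ContinuousLinearMap.mul ℝ C(𝕀, 𝔸) a + -(ContinuousLinearMap.mul ℝ _).flip a
  have hM (f : C(𝕀, 𝔸)) (t : 𝕀) : ‖M f t‖ ≤ (‖a‖₊ + ‖a‖₊ : ℝ≥0) * ‖f t‖ := by
    rw [NNReal.coe_add, add_mul]
    exact (norm_add_le _ _).trans
      (add_le_add (norm_mul_apply_le a f t) (norm_neg_flip_mul_apply_le a f t))
  have hcomm : M (U * V - const 𝕀 1) = a * U * V + U * -(V * a) - 0 := by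
    ext t
    change a t * (U t * V t - 1) + -((U t * V t - 1) * a t) =
      a t * U t * V t + U t * -(V t * a t) - 0
    noncomm_ring
  have hUV : HasPathDeriv (U * V - const 𝕀 1) (M (U * V - const 𝕀 1)) := by
    rw [hcomm]
    exact ((hasPathDeriv_linearFlow (norm_mul_apply_le a) 1).mul
      (hasPathDeriv_linearFlow (norm_neg_flip_mul_apply_le a) 1)).sub (hasPathDeriv_const 1)
  refine sub_eq_zero.1 (hUV.eq_zero hM ?_)
  simp [U, V, linearFlow_apply_zero (norm_mul_apply_le a),
    linearFlow_apply_zero (norm_neg_flip_mul_apply_le a)]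

theorem linearFlow_neg_flip_mul_mul_linearFlow_mul (a : C(𝕀, 𝔸)) :
    linearFlow (-(ContinuousLinearMap.mul ℝ _).flip a) 1 *
      linearFlow (ContinuousLinearMap.mul ℝ _ a) 1 = 1 := by
  set U := linearFlow (ContinuousLinearMap.mul ℝ _ a) 1
  set V := linearFlow (-(ContinuousLinearMap.mul ℝ _).flip a) 1
  have hcancel : -(V * a) * U + V * (a * U) = 0 := by
    ext; simp [mul_assoc]
  have hVU : HasPathDeriv (V * U) (-(V * a) * U + V * (a * U)) :=
    (hasPathDeriv_linearFlow (norm_neg_flip_mul_apply_le a) 1).mul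
      (hasPathDeriv_linearFlow (norm_mul_apply_le a) 1)
  rw [hcancel] at hVU
  refine hVU.eq_const.trans ?_
  ext t
  simp [U, V, linearFlow_apply_zero (norm_mul_apply_le a),
    linearFlow_apply_zero (norm_neg_flip_mul_apply_le a)]

/-- The evolution `Φ` of the path `a`: the invertible solution of `Φ' = a Φ` with `Φ 0 = 1`. Its
inverse `Ψ` solves `Ψ' = -Ψ a`. -/
noncomputable def evolution (a : C(𝕀, 𝔸)) : C(𝕀, 𝔸)ˣ where
  val := linearFlow (ContinuousLinearMap.mul ℝ _ a) 1
  inv := linearFlow (-(ContinuousLinearMap.mul ℝ _).flip a) 1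
  val_inv := linearFlow_mul_mul_linearFlow_neg_flip_mul a
  inv_val := linearFlow_neg_flip_mul_mul_linearFlow_mul a

theorem hasPathDeriv_evolution (a : C(𝕀, 𝔸)) :
    HasPathDeriv (evolution a : C(𝕀, 𝔸)) (a * evolution a) :=
  hasPathDeriv_linearFlow (norm_mul_apply_le a) 1

theorem hasPathDeriv_evolution_inv (a : C(𝕀, 𝔸)) :
    HasPathDeriv (↑(evolution a)⁻¹ : C(𝕀, 𝔸)) (-(↑(evolution a)⁻¹ * a)) :=
  hasPathDeriv_linearFlow (norm_neg_flip_mul_apply_le a) 1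

@[simp] theorem evolution_apply_zero (a : C(𝕀, 𝔸)) : (evolution a : C(𝕀, 𝔸)) 0 = 1 :=
  linearFlow_apply_zero (norm_mul_apply_le a) 1

@[simp] theorem evolution_inv_apply_zero (a : C(𝕀, 𝔸)) :
    (↑(evolution a)⁻¹ : C(𝕀, 𝔸)) 0 = 1 :=
  linearFlow_apply_zero (norm_neg_flip_mul_apply_le a) 1

theorem HasPathDeriv.variation_of_constants {a b f : C(𝕀, 𝔸)} (hf : HasPathDeriv f (a * f + b)) :
    f = evolution a * (const 𝕀 (f 0) + primitive ((↑(evolution a)⁻¹ : C(𝕀, 𝔸)) * b)) := by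
  have h := (hasPathDeriv_evolution_inv a).mul hf
  have hderiv : -((↑(evolution a)⁻¹ : C(𝕀, 𝔸)) * a) * f + ↑(evolution a)⁻¹ * (a * f + b) =
      ↑(evolution a)⁻¹ * b := by
    ext; simp [mul_add, mul_assoc]
  rw [hderiv] at h
  refine (Units.inv_mul_eq_iff_eq_mul _).1 (h.eq_const_add_primitive.trans ?_)
  simp

theorem HasPathDeriv.eq_evolution {a f : C(𝕀, 𝔸)} (hf : HasPathDeriv f (a * f)) (h0 : f 0 = 1) :
    f = evolution a := by
  have hf' : HasPathDeriv f (a * f + 0) := by rwa [add_zero]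
  simpa [h0] using hf'.variation_of_constants

theorem evolution_mul_evolution (a b : C(𝕀, 𝔸)) :
    evolution a * evolution b = evolution (a + (evolution a : C(𝕀, 𝔸)) * b *
      (↑(evolution a)⁻¹ : C(𝕀, 𝔸))) := by
  refine Units.ext (HasPathDeriv.eq_evolution ?_ (by simp))
  rw [Units.val_mul]
  convert (hasPathDeriv_evolution a).mul (hasPathDeriv_evolution b) using 1
  ext
  simp [add_mul, mul_assoc]

theorem contDiff_evolution {n : WithTop ℕ∞} :
    ContDiff ℝ n fun a : C(𝕀, 𝔸) => (evolution a : C(𝕀, 𝔸)) := by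
  have hmul : ContDiff ℝ n (ContinuousLinearMap.mul ℝ C(𝕀, 𝔸)) :=
    ContinuousLinearMap.contDiff _
  exact contDiff_iff_contDiffAt.2 fun a =>
    (contDiffAt_linearFlow (norm_mul_apply_le a) 1).comp a hmul.contDiffAt

theorem contDiff_evolution_inv {n : WithTop ℕ∞} :
    ContDiff ℝ n fun a : C(𝕀, 𝔸) => (↑(evolution a)⁻¹ : C(𝕀, 𝔸)) := by
  refine contDiff_iff_contDiffAt.2 fun a => ?_
  simpa only [Function.comp_def, Ring.inverse_unit] using
    (contDiffAt_ringInverse ℝ (evolution a)).comp a contDiff_evolution.contDiffAt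

theorem fderiv_evolution_apply (a b : C(𝕀, 𝔸)) :
    fderiv ℝ (fun a : C(𝕀, 𝔸) => (evolution a : C(𝕀, 𝔸))) a b =
      evolution a *
        primitive ((↑(evolution a)⁻¹ : C(𝕀, 𝔸)) * (b * (evolution a : C(𝕀, 𝔸)))) := by
  have hD := (contDiff_evolution (n := 1)).differentiable one_ne_zero a |>.hasFDerivAt
  set D := fderiv ℝ (fun a : C(𝕀, 𝔸) => (evolution a : C(𝕀, 𝔸))) a
  have hint (a : C(𝕀, 𝔸)) :
      (evolution a : C(𝕀, 𝔸)) = const 𝕀 1 + primitive (a * (evolution a : C(𝕀, 𝔸))) := by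
    simpa using (hasPathDeriv_evolution a).eq_const_add_primitive
  have hD' := (primitive.hasFDerivAt.comp a ((hasFDerivAt_id a).mul' hD)).const_add (const 𝕀 1)
  have hDb : D b = primitive (a * D b + b * (evolution a : C(𝕀, 𝔸))) :=
    DFunLike.congr_fun (hD.unique (hD'.congr_of_eventuallyEq (.of_forall hint))) b
  have hpath := hasPathDeriv_primitive (a * D b + b * (evolution a : C(𝕀, 𝔸)))
  rw [← hDb] at hpath
  have h0 : D b 0 = 0 := by rw [hDb, primitive_apply_zero]
  refine hpath.variation_of_constants.trans ?_
  rw [h0]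
  exact congrArg _ (zero_add _)

theorem evolution_const_apply (x : 𝔸) (t : 𝕀) :
    (evolution (const 𝕀 x) : C(𝕀, 𝔸)) t = NormedSpace.exp ((t : ℝ) • x) := by
  let := NormedAlgebra.restrictScalars ℚ ℝ 𝔸
  let e : C(𝕀, 𝔸) := ⟨fun t => NormedSpace.exp ((t : ℝ) • x),
    NormedSpace.exp_continuous.comp (by fun_prop)⟩
  have he : HasPathDeriv e (const 𝕀 x * e) := fun t =>
    (hasDerivAt_exp_smul_const' x (t : ℝ)).hasDerivWithinAt.congr
      (fun s hs => pathExt_of_mem e hs) (pathExt_coe e t)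
  exact DFunLike.congr_fun (he.eq_evolution (by simp [e])).symm t

end Evolution

section PathGroup

open ContinuousMap

variable {g : Type*} [NormedAddCommGroup g] [NormedSpace ℝ g]

theorem IsLieBracket.skew {B : g →ₗ[ℝ] g →ₗ[ℝ] g} (hB : IsLieBracket B) (x y : g) :
    B x y = -B y x := by
  have h := hB.1 (x + y)
  simp only [map_add, LinearMap.add_apply, hB.1, zero_add, add_zero] at h
  exact eq_neg_of_add_eq_zero_right h

/-- The pointwise action of a path of endomorphisms on a path of vectors. -/
noncomputable def pathApply : C(𝕀, g →L[ℝ] g) →L[ℝ] C(𝕀, g) →L[ℝ] C(𝕀, g) :=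
  pointwiseBilin (.id ℝ (g →L[ℝ] g))

@[simp] theorem pathApply_apply (Φ : C(𝕀, g →L[ℝ] g)) (δ : C(𝕀, g)) (t : 𝕀) :
    pathApply Φ δ t = Φ t (δ t) := rfl

theorem HasPathDeriv.pathApply {Φ Φ' : C(𝕀, g →L[ℝ] g)} {δ δ' : C(𝕀, g)} (hΦ : HasPathDeriv Φ Φ')
    (hδ : HasPathDeriv δ δ') :
    HasPathDeriv (pathApply Φ δ) (pathApply Φ δ' + pathApply Φ' δ) :=
  hΦ.bilin (.id ℝ (g →L[ℝ] g)) hδ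

theorem continuous_pathApply :
    Continuous fun p : C(𝕀, g →L[ℝ] g) × C(𝕀, g) => pathApply p.1 p.2 :=
  (pathApply.continuous.comp continuous_fst).clm_apply continuous_snd

theorem continuousOn_pathApply {X : Type*} [TopologicalSpace X] {S : Set X}
    {Φ : X → C(𝕀, g →L[ℝ] g)} {δ : X → C(𝕀, g)} (hΦ : ContinuousOn Φ S) (hδ : ContinuousOn δ S) :
    ContinuousOn (fun x => pathApply (Φ x) (δ x)) S :=
  (pathApply.continuous.comp_continuousOn hΦ).clm_apply hδ

theorem hasDerivWithinAt_pathApply {S : Set ℝ} {s : ℝ} {Φ : ℝ → C(𝕀, g →L[ℝ] g)}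
    {δ : ℝ → C(𝕀, g)} {Φ' : C(𝕀, g →L[ℝ] g)} {δ' : C(𝕀, g)} (hΦ : HasDerivWithinAt Φ Φ' S s)
    (hδ : HasDerivWithinAt δ δ' S s) :
    HasDerivWithinAt (fun s => pathApply (Φ s) (δ s))
      (pathApply (Φ s) δ' + pathApply Φ' (δ s)) S s :=
  hasDerivWithinAt_pointwiseBilin (.id ℝ (g →L[ℝ] g)) hΦ hδ

variable (L : g →L[ℝ] g →L[ℝ] g)

/-- The path `t ↦ ad (γ t)` of endomorphisms. -/
noncomputable def adPath : C(𝕀, g) →L[ℝ] C(𝕀, g →L[ℝ] g) :=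
  L.compLeftContinuous ℝ 𝕀

@[simp] theorem adPath_apply (γ : C(𝕀, g)) (t : 𝕀) : adPath L γ t = L (γ t) := rfl

variable [CompleteSpace g]

theorem adPath_primitive (γ : C(𝕀, g)) : adPath L (primitive γ) = primitive (adPath L γ) := by
  refine ((hasPathDeriv_primitive γ).map L).eq_const_add_primitive.trans ?_
  rw [show L.compLeftContinuous ℝ 𝕀 (primitive γ) 0 = 0 from
    (congrArg L (primitive_apply_zero γ)).trans (map_zero L)]
  exact zero_add _

/-- The path `A_γ` of endomorphisms, solving `A' = ad γ ∘ A` with `A 0 = 1`. -/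
noncomputable def adEvolution (γ : C(𝕀, g)) : C(𝕀, g →L[ℝ] g) :=
  evolution (adPath L γ)

/-- The pointwise inverse `t ↦ (A_γ t)⁻¹` of `adEvolution L γ`. -/
noncomputable def adEvolutionInv (γ : C(𝕀, g)) : C(𝕀, g →L[ℝ] g) :=
  ↑(evolution (adPath L γ))⁻¹

theorem adEvolutionInv_mul_adEvolution (γ : C(𝕀, g)) :
    adEvolutionInv L γ * adEvolution L γ = 1 :=
  Units.inv_mul _

theorem adEvolution_mul_adEvolutionInv (γ : C(𝕀, g)) :
    adEvolution L γ * adEvolutionInv L γ = 1 :=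
  Units.mul_inv _

@[simp] theorem adEvolutionInv_apply_adEvolution_apply (γ : C(𝕀, g)) (t : 𝕀) (x : g) :
    adEvolutionInv L γ t (adEvolution L γ t x) = x :=
  congrArg (fun Φ : C(𝕀, g →L[ℝ] g) => Φ t x) (adEvolutionInv_mul_adEvolution L γ)

@[simp] theorem adEvolution_apply_adEvolutionInv_apply (γ : C(𝕀, g)) (t : 𝕀) (x : g) :
    adEvolution L γ t (adEvolutionInv L γ t x) = x :=
  congrArg (fun Φ : C(𝕀, g →L[ℝ] g) => Φ t x) (adEvolution_mul_adEvolutionInv L γ)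

@[simp] theorem adEvolution_apply_zero (γ : C(𝕀, g)) : adEvolution L γ 0 = 1 :=
  evolution_apply_zero _

@[simp] theorem adEvolutionInv_apply_zero (γ : C(𝕀, g)) : adEvolutionInv L γ 0 = 1 :=
  evolution_inv_apply_zero _

theorem hasPathDeriv_adEvolution (γ : C(𝕀, g)) :
    HasPathDeriv (adEvolution L γ) (adPath L γ * adEvolution L γ) :=
  hasPathDeriv_evolution _

theorem hasPathDeriv_adEvolutionInv (γ : C(𝕀, g)) :
    HasPathDeriv (adEvolutionInv L γ) (-(adEvolutionInv L γ * adPath L γ)) :=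
  hasPathDeriv_evolution_inv _

theorem contDiff_adEvolution {n : WithTop ℕ∞} : ContDiff ℝ n (adEvolution L) :=
  contDiff_evolution.comp (g := fun a => (evolution a : C(𝕀, g →L[ℝ] g)))
    (ContinuousLinearMap.contDiff (adPath L))

theorem contDiff_adEvolutionInv {n : WithTop ℕ∞} : ContDiff ℝ n (adEvolutionInv L) :=
  contDiff_evolution_inv.comp (g := fun a => (↑(evolution a)⁻¹ : C(𝕀, g →L[ℝ] g)))
    (ContinuousLinearMap.contDiff (adPath L))

theorem adEvolutionInv_apply_of_forall_eq_zero {γ : C(𝕀, g)} {x : g} (hx : ∀ t, L (γ t) x = 0)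
    (t : 𝕀) : adEvolutionInv L γ t x = x := by
  have hderiv : HasPathDeriv (pathApply (adEvolutionInv L γ) (const 𝕀 x)) 0 := by
    have h := (hasPathDeriv_adEvolutionInv L γ).pathApply (hasPathDeriv_const x)
    convert h using 1
    ext t
    simp [-map_mul, hx]
  simpa using congrArg (fun f : C(𝕀, g) => f t) hderiv.eq_const

theorem adEvolution_apply_of_forall_eq_zero {γ : C(𝕀, g)} {x : g} (hx : ∀ t, L (γ t) x = 0)
    (t : 𝕀) : adEvolution L γ t x = x := by
  conv_lhs => rw [← adEvolutionInv_apply_of_forall_eq_zero L hx t]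
  rw [adEvolution_apply_adEvolutionInv_apply]

theorem adEvolution_zero : adEvolution L (0 : C(𝕀, g)) = 1 := by
  ext t x
  exact adEvolution_apply_of_forall_eq_zero L (fun t => by simp) t

/-- The Duistermaat–Kolk product `(γ · δ) t = γ t + A_γ t (δ t)`. -/
noncomputable def pathProd (γ δ : C(𝕀, g)) : C(𝕀, g) :=
  γ + pathApply (adEvolution L γ) δ

theorem pathProd_apply (γ δ : C(𝕀, g)) (t : 𝕀) :
    pathProd L γ δ t = γ t + adEvolution L γ t (δ t) := rfl

theorem pathProd_zero (γ : C(𝕀, g)) : pathProd L γ 0 = γ := by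
  simp [pathProd]

theorem pathProd_inv (γ : C(𝕀, g)) : pathProd L γ (-pathApply (adEvolutionInv L γ) γ) = 0 := by
  ext t
  simp [pathProd_apply]

variable {L} (hL : IsLieBracket L.toLinearMap₁₂)
include hL

theorem adEvolution_lie (γ : C(𝕀, g)) (t : 𝕀) (x y : g) :
    adEvolution L γ t (L x y) = L (adEvolution L γ t x) (adEvolution L γ t y) := by
  set A := adEvolution L γ
  set V := adEvolutionInv L γ
  have hx := ((hasPathDeriv_adEvolution L γ).pathApply (hasPathDeriv_const x)).map L
  have hV := (hasPathDeriv_adEvolutionInv L γ).mul (hx.mul (hasPathDeriv_adEvolution L γ))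
  have hderiv : -(V * adPath L γ) * (adPath L (pathApply A (const 𝕀 x)) * A) +
      V * (adPath L (pathApply A 0 + pathApply (adPath L γ * A) (const 𝕀 x)) * A +
        adPath L (pathApply A (const 𝕀 x)) * (adPath L γ * A)) = 0 := by
    ext t y
    have jacobi : L (γ t) (L (A t x) (A t y)) =
        L (L (γ t) (A t x)) (A t y) + L (A t x) (L (γ t) (A t y)) := hL.2 _ _ _
    simp [-map_mul, jacobi]
  have hconst := (HasPathDeriv.eq_const (hderiv ▸ hV) :
    V * (adPath L (pathApply A (const 𝕀 x)) * A) = _)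
  have h := congrArg (fun Φ : C(𝕀, g →L[ℝ] g) => A t (Φ t y)) hconst
  simpa [-map_mul, A, V] using h.symm

theorem adPath_pathApply_adEvolution (γ δ : C(𝕀, g)) :
    adPath L (pathApply (adEvolution L γ) δ) =
      adEvolution L γ * adPath L δ * adEvolutionInv L γ := by
  ext t y
  simp [adEvolution_lie hL]

theorem adEvolution_pathProd (γ δ : C(𝕀, g)) :
    adEvolution L (pathProd L γ δ) = adEvolution L γ * adEvolution L δ := by
  rw [adEvolution, pathProd, map_add, adPath_pathApply_adEvolution hL]
  exact (congrArg Units.val (evolution_mul_evolution _ _)).symm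

theorem adEvolutionInv_pathProd (γ δ : C(𝕀, g)) :
    adEvolutionInv L (pathProd L γ δ) = adEvolutionInv L δ * adEvolutionInv L γ := by
  rw [adEvolutionInv, pathProd, map_add, adPath_pathApply_adEvolution hL]
  have h := congrArg (fun u : C(𝕀, g →L[ℝ] g)ˣ => (↑u⁻¹ : C(𝕀, g →L[ℝ] g)))
    (evolution_mul_evolution (adPath L γ) (adPath L δ))
  simp only [mul_inv_rev, Units.val_mul] at h
  exact h.symm

theorem pathProd_assoc (γ δ ε : C(𝕀, g)) :
    pathProd L (pathProd L γ δ) ε = pathProd L γ (pathProd L δ ε) := by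
  ext t
  simp [pathProd_apply, adEvolution_pathProd hL, add_assoc]

omit hL

/-- The group `P(g)` of continuous paths in the Banach Lie algebra `(g, L)`. -/
def PathGroup (_ : IsLieBracket L.toLinearMap₁₂) : Type _ := C(𝕀, g)

namespace PathGroup

noncomputable instance : NormedAddCommGroup (PathGroup hL) :=
  inferInstanceAs (NormedAddCommGroup C(𝕀, g))

noncomputable instance : NormedSpace ℝ (PathGroup hL) :=
  inferInstanceAs (NormedSpace ℝ C(𝕀, g))

noncomputable instance : Group (PathGroup hL) :=
  letI : Mul (PathGroup hL) := ⟨pathProd L⟩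
  letI : One (PathGroup hL) := ⟨(0 : C(𝕀, g))⟩
  letI : Inv (PathGroup hL) := ⟨fun γ => -pathApply (adEvolutionInv L γ) γ⟩
  Group.ofRightAxioms (pathProd_assoc hL) (pathProd_zero L) (pathProd_inv L)

instance : IsTopologicalGroup (PathGroup hL) where
  continuous_mul := (continuous_fst (X := C(𝕀, g)) (Y := C(𝕀, g))).add
    (continuous_pathApply.comp₂ ((contDiff_adEvolution L (n := 0)).continuous.comp continuous_fst)
      continuous_snd)
  continuous_inv := (continuous_pathApply.comp₂ (contDiff_adEvolutionInv L (n := 0)).continuous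
    continuous_id).neg

instance : SimplyConnectedSpace (PathGroup hL) :=
  have := RealTopologicalVectorSpace.contractibleSpace (E := PathGroup hL)
  .ofContractible _

end PathGroup

end PathGroup

section Horizontal

open ContinuousMap
open scoped Topology

variable {g : Type*} [NormedAddCommGroup g] [NormedSpace ℝ g] [CompleteSpace g]
  (L : g →L[ℝ] g →L[ℝ] g)

/-- The path `t ↦ ∫₀ᵗ A_γ⁻¹ v`. If `γ` is the right logarithmic derivative of a path in a Lie group
integrating `(g, L)`, this is the left-trivialized first variation of that path in the
direction `v`. -/
noncomputable def leftVariation (γ v : C(𝕀, g)) : C(𝕀, g) :=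
  primitive (pathApply (adEvolutionInv L γ) v)

/-- The velocity at `(γ, δ)` of `pathProd L`, in the directions `v` and `w`. -/
noncomputable def pathProdDeriv (γ v δ w : C(𝕀, g)) : C(𝕀, g) :=
  v + (pathApply (adEvolution L γ) w +
    pathApply (adEvolution L γ * adPath L (leftVariation L γ v)) δ)

theorem continuousOn_leftVariation {X : Type*} [TopologicalSpace X] {S : Set X}
    {γ v : X → C(𝕀, g)} (hγ : ContinuousOn γ S) (hv : ContinuousOn v S) :
    ContinuousOn (fun x => leftVariation L (γ x) (v x)) S :=
  primitive.continuous.comp_continuousOn (continuousOn_pathApply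
    ((contDiff_adEvolutionInv L (n := 0)).continuous.comp_continuousOn hγ) hv)

theorem leftVariation_apply_one (γ v : C(𝕀, g)) :
    leftVariation L γ v 1 = ∫ t in (0 : ℝ)..1, pathExt (pathApply (adEvolutionInv L γ) v) t := rfl

theorem continuousOn_pathProdDeriv {S : Set ℝ} {γ v δ w : ℝ → C(𝕀, g)} (hγ : ContinuousOn γ S)
    (hv : ContinuousOn v S) (hδ : ContinuousOn δ S) (hw : ContinuousOn w S) :
    ContinuousOn (fun s => pathProdDeriv L (γ s) (v s) (δ s) (w s)) S := by
  have hA : ContinuousOn (fun s => adEvolution L (γ s)) S :=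
    (contDiff_adEvolution L (n := 0)).continuous.comp_continuousOn hγ
  have hP : ContinuousOn (fun s => leftVariation L (γ s) (v s)) S :=
    continuousOn_leftVariation L hγ hv
  have hA' : ContinuousOn (fun s => adEvolution L (γ s) *
      adPath L (leftVariation L (γ s) (v s))) S :=
    hA.mul ((adPath L).continuous.comp_continuousOn hP)
  exact hv.add ((continuousOn_pathApply hA hw).add (continuousOn_pathApply hA' hδ))

variable {L} (hL : IsLieBracket L.toLinearMap₁₂)
include hL

theorem adEvolutionInv_mul_adPath_mul_adEvolution (γ v : C(𝕀, g)) :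
    adEvolutionInv L γ * (adPath L v * adEvolution L γ) =
      adPath L (pathApply (adEvolutionInv L γ) v) := by
  ext t x
  have h := adEvolution_lie hL γ t (adEvolutionInv L γ t (v t)) x
  rw [adEvolution_apply_adEvolutionInv_apply] at h
  simp [← h]

theorem fderiv_adEvolution_apply (γ v : C(𝕀, g)) :
    fderiv ℝ (adEvolution L) γ v = adEvolution L γ * adPath L (leftVariation L γ v) := by
  rw [leftVariation, adPath_primitive, ← adEvolutionInv_mul_adPath_mul_adEvolution hL]
  refine Eq.trans ?_ (fderiv_evolution_apply (adPath L γ) (adPath L v))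
  rw [show adEvolution L = (fun a => (evolution a : C(𝕀, g →L[ℝ] g))) ∘ adPath L from rfl,
    fderiv_comp _ (contDiff_evolution.differentiable one_ne_zero _) (adPath L).differentiableAt,
    ContinuousLinearMap.fderiv]
  rfl

variable {Γ Δ : ℝ → C(𝕀, g)} {v w : C(𝕀, g)} {S : Set ℝ} {s : ℝ}

theorem hasDerivWithinAt_adEvolution (hΓ : HasDerivWithinAt Γ v S s) :
    HasDerivWithinAt (fun s => adEvolution L (Γ s))
      (adEvolution L (Γ s) * adPath L (leftVariation L (Γ s) v)) S s := by
  rw [← fderiv_adEvolution_apply hL]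
  exact ((contDiff_adEvolution L).differentiable one_ne_zero _).hasFDerivAt.comp_hasDerivWithinAt
    s hΓ

theorem hasDerivWithinAt_pathProd (hΓ : HasDerivWithinAt Γ v S s)
    (hΔ : HasDerivWithinAt Δ w S s) :
    HasDerivWithinAt (fun s => pathProd L (Γ s) (Δ s)) (pathProdDeriv L (Γ s) v (Δ s) w) S s :=
  hΓ.add (hasDerivWithinAt_pathApply (hasDerivWithinAt_adEvolution hL hΓ) hΔ)

theorem leftVariation_pathProd (γ v δ w : C(𝕀, g)) :
    leftVariation L (pathProd L γ δ) (pathProdDeriv L γ v δ w) =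
      pathApply (adEvolutionInv L δ) (leftVariation L γ v) + leftVariation L δ w := by
  set P := leftVariation L γ v with hP
  have hprod : pathApply (adEvolutionInv L δ) P = primitive
      (pathApply (adEvolutionInv L δ) (pathApply (adEvolutionInv L γ) v) +
        pathApply (-(adEvolutionInv L δ * adPath L δ)) P) := by
    have hderiv : HasPathDeriv (pathApply (adEvolutionInv L δ) P)
        (pathApply (adEvolutionInv L δ) (pathApply (adEvolutionInv L γ) v) +
          pathApply (-(adEvolutionInv L δ * adPath L δ)) P) :=
      (hasPathDeriv_adEvolutionInv L δ).pathApply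
        (hasPathDeriv_primitive (pathApply (adEvolutionInv L γ) v))
    have hzero : pathApply (adEvolutionInv L δ) P 0 = 0 := by
      rw [pathApply_apply, hP, leftVariation, primitive_apply_zero, map_zero]
    rw [hderiv.eq_const_add_primitive, hzero]
    exact zero_add _
  rw [hprod]
  unfold leftVariation
  rw [← map_add]
  congr 1
  ext t
  have hskew : L (P t) (δ t) = -L (δ t) (P t) := hL.skew _ _
  simp only [adEvolutionInv_pathProd hL, pathProdDeriv, ← hP, map_add, ContinuousMap.add_apply,
    pathApply_apply, ContinuousMap.mul_apply, mul_apply_eq_comp,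
    adEvolutionInv_apply_adEvolution_apply, adPath_apply, hskew, map_neg, _root_.neg_apply,
    ContinuousMap.neg_apply]
  abel

end Horizontal

section HorizontalSubgroup

open ContinuousMap

variable {g : Type*} [NormedAddCommGroup g] [NormedSpace ℝ g] [CompleteSpace g]
  (L : g →L[ℝ] g →L[ℝ] g)

theorem leftVariation_zero (γ : C(𝕀, g)) : leftVariation L γ 0 = 0 := by
  simp [leftVariation]

theorem leftVariation_smul (γ v : C(𝕀, g)) (c : ℝ) :
    leftVariation L γ (c • v) = c • leftVariation L γ v := by
  simp [leftVariation]

/-- The continuously differentiable curves `Γ` in `C([0,1], g)`, with derivative `Γ'`, along which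
the endpoint of the path in a Lie group integrating `(g, L)` does not move. -/
structure IsHorizontal (Γ Γ' : ℝ → C(𝕀, g)) : Prop where
  hasDerivWithinAt : ∀ s ∈ 𝕀, HasDerivWithinAt Γ (Γ' s) 𝕀 s
  continuousOn_deriv : ContinuousOn Γ' 𝕀
  leftVariation_eq_zero : ∀ s ∈ 𝕀, leftVariation L (Γ s) (Γ' s) 1 = 0

namespace IsHorizontal

variable {L} {Γ Γ' Δ Δ' : ℝ → C(𝕀, g)}

theorem continuousOn (hΓ : IsHorizontal L Γ Γ') : ContinuousOn Γ 𝕀 :=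
  fun s hs => (hΓ.hasDerivWithinAt s hs).continuousWithinAt

variable (L) in
theorem const (γ : C(𝕀, g)) : IsHorizontal L (fun _ => γ) (fun _ => 0) where
  hasDerivWithinAt _ _ := hasDerivWithinAt_const _ _ _
  continuousOn_deriv := continuousOn_const
  leftVariation_eq_zero _ _ := by rw [leftVariation_zero, ContinuousMap.zero_apply]

theorem comp_affine (hΓ : IsHorizontal L Γ Γ') {a b : ℝ}
    (hab : Set.MapsTo (fun s => a * s + b) 𝕀 𝕀) :
    IsHorizontal L (fun s => Γ (a * s + b)) (fun s => a • Γ' (a * s + b)) where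
  hasDerivWithinAt s hs := by
    have haff : HasDerivWithinAt (fun s : ℝ => a * s + b) a 𝕀 s := by
      simpa using (((hasDerivAt_id s).const_mul a).add_const b).hasDerivWithinAt
    exact (hΓ.hasDerivWithinAt _ (hab hs)).scomp s haff hab
  continuousOn_deriv := (hΓ.continuousOn_deriv.comp (by fun_prop) hab).const_smul a
  leftVariation_eq_zero s hs := by
    rw [leftVariation_smul, ContinuousMap.smul_apply, hΓ.leftVariation_eq_zero _ (hab hs),
      smul_zero]

variable (hL : IsLieBracket L.toLinearMap₁₂)
include hL

theorem mul (hΓ : IsHorizontal L Γ Γ') (hΔ : IsHorizontal L Δ Δ') :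
    IsHorizontal L (fun s => pathProd L (Γ s) (Δ s))
      (fun s => pathProdDeriv L (Γ s) (Γ' s) (Δ s) (Δ' s)) where
  hasDerivWithinAt s hs :=
    hasDerivWithinAt_pathProd hL (hΓ.hasDerivWithinAt s hs) (hΔ.hasDerivWithinAt s hs)
  continuousOn_deriv := continuousOn_pathProdDeriv L hΓ.continuousOn hΓ.continuousOn_deriv
    hΔ.continuousOn hΔ.continuousOn_deriv
  leftVariation_eq_zero s hs := by
    rw [leftVariation_pathProd hL, ContinuousMap.add_apply, pathApply_apply,
      hΓ.leftVariation_eq_zero s hs, hΔ.leftVariation_eq_zero s hs, map_zero, add_zero]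

theorem adEvolution_apply_one (hΓ : IsHorizontal L Γ Γ') :
    adEvolution L (Γ 1) 1 = adEvolution L (Γ 0) 1 := by
  have hderiv : ∀ s ∈ 𝕀, HasDerivWithinAt (fun s => adEvolution L (Γ s) 1) 0 𝕀 s := by
    intro s hs
    have h : HasDerivWithinAt (fun s => adEvolution L (Γ s) 1)
        (adEvolution L (Γ s) 1 * L (leftVariation L (Γ s) (Γ' s) 1)) 𝕀 s :=
      hasDerivWithinAt_eval (hasDerivWithinAt_adEvolution hL (hΓ.hasDerivWithinAt s hs)) 1
    rwa [hΓ.leftVariation_eq_zero s hs, map_zero, mul_zero] at h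
  exact constant_of_derivWithin_zero (fun s hs => (hderiv s hs).differentiableWithinAt)
    (fun s hs => (hderiv s (Set.Ico_subset_Icc_self hs)).derivWithin
      (uniqueDiffOn_Icc zero_lt_one s (Set.Ico_subset_Icc_self hs))) 1 ⟨zero_le_one, le_rfl⟩

end IsHorizontal

namespace PathGroup

variable {L} (hL : IsLieBracket L.toLinearMap₁₂)

/-- The subgroup `P(g)₀` of endpoints of the horizontal curves that start at the unit. -/
def horizontalSubgroup : Subgroup (PathGroup hL) where
  carrier := {γ | ∃ Γ Γ' : ℝ → C(𝕀, g), IsHorizontal L Γ Γ' ∧ Γ 0 = 0 ∧ Γ 1 = γ}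
  one_mem' := ⟨_, _, .const L 0, rfl, rfl⟩
  mul_mem' := by
    rintro _ _ ⟨Γ, Γ', hΓ, hΓ0, rfl⟩ ⟨Δ, Δ', hΔ, hΔ0, rfl⟩
    exact ⟨_, _, hΓ.mul hL hΔ, by simp only [hΓ0, hΔ0, pathProd_zero], rfl⟩
  inv_mem' := by
    rintro γ ⟨Γ, Γ', hΓ, hΓ0, hΓ1⟩
    have hreverse : Set.MapsTo (fun s : ℝ => -1 * s + 1) 𝕀 𝕀 :=
      fun s hs => ⟨by linarith [hs.2], by linarith [hs.1]⟩
    refine ⟨_, _, (IsHorizontal.const L (γ⁻¹ :)).mul hL (hΓ.comp_affine hreverse), ?_, ?_⟩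
    · simp only [mul_zero, zero_add, hΓ1]
      exact inv_mul_cancel γ
    · simp only [mul_one, neg_add_cancel, hΓ0]
      exact mul_one γ⁻¹

instance : (horizontalSubgroup hL).Normal where
  conj_mem := by
    rintro _ ⟨Γ, Γ', hΓ, hΓ0, rfl⟩ δ
    refine ⟨_, _, ((IsHorizontal.const L δ).mul hL hΓ).mul hL (IsHorizontal.const L (δ⁻¹ :)), ?_,
      rfl⟩
    simp only [hΓ0]
    change δ * 1 * δ⁻¹ = 1
    rw [mul_one, mul_inv_cancel]

theorem isPathConnected_horizontalSubgroup :
    IsPathConnected (horizontalSubgroup hL : Set (PathGroup hL)) := by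
  refine ⟨1, one_mem _, ?_⟩
  rintro _ ⟨Γ, Γ', hΓ, hΓ0, rfl⟩
  refine ⟨⟨⟨fun s => Γ s, hΓ.continuousOn.domRestrict⟩, hΓ0, rfl⟩, fun s => ?_⟩
  have hscale : Set.MapsTo (fun r : ℝ => s * r + 0) 𝕀 𝕀 := fun r hr => by
    simpa using unitInterval.mul_mem s.2 hr
  exact ⟨_, _, hΓ.comp_affine hscale, by simp [hΓ0], congrArg Γ (by simp)⟩

theorem adEvolution_apply_one_of_mem {γ : PathGroup hL}
    (hγ : γ ∈ (horizontalSubgroup hL).topologicalClosure) : adEvolution L γ 1 = 1 := by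
  have hclosed : IsClosed {γ : PathGroup hL | adEvolution L γ 1 = 1} :=
    isClosed_eq ((continuous_eval_const (1 : 𝕀)).comp
      (contDiff_adEvolution L (n := 0)).continuous) continuous_const
  refine closure_minimal ?_ hclosed hγ
  rintro _ ⟨Γ, Γ', hΓ, hΓ0, rfl⟩
  exact (hΓ.adEvolution_apply_one hL).trans (by rw [hΓ0, adEvolution_zero, ContinuousMap.one_apply])

end PathGroup

end HorizontalSubgroup

section SmallControl

open Filter Metric
open scoped Topology NNReal

theorem exists_forall_mem_closedBall_of_isPicardLindelof {E : Type*} [NormedAddCommGroup E]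
    [NormedSpace ℝ E] [CompleteSpace E] {f : ℝ → E → E} {a b : ℝ} {t₀ : Set.Icc a b} {x₀ x : E}
    {R r C K : ℝ≥0} (hf : IsPicardLindelof f t₀ x₀ R r C K) (hx : x ∈ closedBall x₀ r) :
    ∃ y : ℝ → E, y t₀ = x ∧ ∀ t ∈ Set.Icc a b,
      HasDerivWithinAt y (f t (y t)) (Set.Icc a b) t ∧ y t ∈ closedBall x₀ R := by
  obtain ⟨α, hα⟩ := ODE.FunSpace.exists_isFixedPt_next hf hx
  have hball (t : ℝ) : α.compProj t ∈ closedBall x₀ R := α.compProj_mem_closedBall hf.mul_max_le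
  have hpicard : ∀ t ∈ Set.Icc a b, α.compProj t = ODE.picard f t₀ x α.compProj t := by
    intro t ht
    nth_rw 1 [← hα]
    rw [ODE.FunSpace.compProj_of_mem ht, ODE.FunSpace.next_apply]
  refine ⟨α.compProj, ?_, fun t ht => ⟨?_, hball t⟩⟩
  · rw [ODE.FunSpace.compProj_val, ← hα, ODE.FunSpace.next_apply₀]
  · exact (ODE.hasDerivWithinAt_picard_Icc t₀.2 hf.continuousOn_uncurry
      α.continuous_compProj.continuousOn (fun t _ => hball t) x ht).congr_of_mem hpicard ht

theorem exists_solution_of_small_control {E G : Type*} [NormedAddCommGroup E] [NormedSpace ℝ E]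
    [CompleteSpace E] [NormedAddCommGroup G] [NormedSpace ℝ G] {F : E → G →L[ℝ] E} {x₀ : E}
    (hF : ContDiffAt ℝ 1 F x₀) {U : Set E} (hU : U ∈ 𝓝 x₀) :
    ∃ η > 0, ∀ c : ℝ → G, ContinuousOn c 𝕀 → (∀ s ∈ 𝕀, ‖c s‖ ≤ η) →
      ∃ y : ℝ → E, y 0 = x₀ ∧ ∀ s ∈ 𝕀, HasDerivWithinAt y (F (y s) (c s)) 𝕀 s ∧ y s ∈ U := by
  obtain ⟨K, V, hV, hK⟩ := hF.exists_lipschitzOnWith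
  set C : ℝ := ‖F x₀‖ + 1
  have hC : 0 < C := by positivity
  have hbound : ∀ᶠ x in 𝓝 x₀, ‖F x‖ < C :=
    hF.continuousAt.norm.eventually (gt_mem_nhds (lt_add_one _))
  obtain ⟨a, ha, hball⟩ := nhds_basis_closedBall.mem_iff.1 (inter_mem (inter_mem hV hbound) hU)
  refine ⟨min 1 (a / C), by positivity, fun c hc hcη => ?_⟩
  have hpl : IsPicardLindelof (fun s y => F y (c s)) (⟨0, le_rfl, zero_le_one⟩ : 𝕀) x₀
      ⟨a, ha.le⟩ 0 ⟨a, ha.le⟩ K := by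
    refine ⟨fun s hs => LipschitzOnWith.of_dist_le_mul fun x hx y hy => ?_,
      fun x _ => (F x).continuous.comp_continuousOn hc, fun s hs x hx => ?_, by simp⟩
    · calc dist (F x (c s)) (F y (c s)) ≤ dist (F x) (F y) * ‖c s‖ := by
            simpa only [dist_eq_norm, sub_apply] using (F x - F y).le_opNorm (c s)
        _ ≤ dist (F x) (F y) * 1 := by gcongr; exact (hcη s hs).trans (min_le_left _ _)
        _ ≤ K * dist x y := by rw [mul_one]; exact hK.dist_le_mul x (hball hx).1.1 y (hball hy).1.1
    · calc ‖F x (c s)‖ ≤ ‖F x‖ * ‖c s‖ := (F x).le_opNorm _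
        _ ≤ C * (a / C) := by
          gcongr
          exacts [(hball hx).1.2.le, (hcη s hs).trans (min_le_right _ _)]
        _ = a := mul_div_cancel₀ a hC.ne'
  obtain ⟨y, hy0, hy⟩ :=
    exists_forall_mem_closedBall_of_isPicardLindelof hpl (mem_closedBall_self le_rfl)
  exact ⟨y, hy0, fun s hs => ⟨(hy s hs).1, (hball (hy s hs).2).2⟩⟩

end SmallControl

section ConstantPaths

open ContinuousMap Filter
open scoped Topology

variable {g : Type*} [NormedAddCommGroup g] [NormedSpace ℝ g]

/-- The constant paths, as a continuous linear map. -/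
noncomputable def constPath : g →L[ℝ] C(𝕀, g) :=
  .const ℝ 𝕀

variable [CompleteSpace g] (L : g →L[ℝ] g →L[ℝ] g)

/-- The operator `∫₀¹ A_y(t)⁻¹ dt` for the constant path `y`: the left-trivialized differential of
the exponential map at `y`. -/
noncomputable def expDifferential (y : g) : g →L[ℝ] g :=
  primitive (adEvolutionInv L (constPath y)) 1

theorem leftVariation_constPath (y w : g) :
    leftVariation L (constPath y) (constPath w) 1 = expDifferential L y w :=
  (ContinuousLinearMap.apply ℝ g w).intervalIntegral_comp_comm
    ((continuous_pathExt (adEvolutionInv L (constPath y))).intervalIntegrable 0 1)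

theorem contDiff_adEvolutionInv_constPath {n : WithTop ℕ∞} :
    ContDiff ℝ n fun y : g => adEvolutionInv L (constPath y) :=
  (contDiff_adEvolutionInv L).comp (constPath (g := g)).contDiff

theorem contDiff_expDifferential {n : WithTop ℕ∞} : ContDiff ℝ n (expDifferential L) :=
  (evalCLM ℝ (1 : 𝕀) : C(𝕀, g →L[ℝ] g) →L[ℝ] g →L[ℝ] g).contDiff.comp
    ((primitive (E := g →L[ℝ] g)).contDiff.comp (contDiff_adEvolutionInv_constPath L))

theorem expDifferential_zero : expDifferential L 0 = 1 := by
  ext x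
  have hinv (t : 𝕀) : adEvolutionInv L (constPath 0) t x = x :=
    adEvolutionInv_apply_of_forall_eq_zero L (fun t => by simp) t
  have hpath : pathApply (adEvolutionInv L (constPath 0)) (constPath x) = const 𝕀 x := ext hinv
  have hint : ∀ t, pathExt (const 𝕀 x) t = x := fun _ => rfl
  rw [← leftVariation_constPath, leftVariation_apply_one, hpath]
  simp [hint]

/-- The velocity `y'`, as a function of `y` and of the left variation `c` of a curve `Γ` of paths,
for which the variation of `s ↦ pathProd L (Γ s) (constPath (y s))` vanishes. -/
noncomputable def constCorrection (y : g) : g →L[ℝ] g :=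
  -(Ring.inverse (expDifferential L y) * adEvolutionInv L (constPath y) 1)

theorem eventually_isUnit_expDifferential : ∀ᶠ y in 𝓝 (0 : g), IsUnit (expDifferential L y) :=
  (contDiff_expDifferential L (n := 0)).continuous.continuousAt.eventually
    (Units.isOpen.mem_nhds (by rw [expDifferential_zero]; exact isUnit_one))

theorem contDiffAt_constCorrection {y : g} (hy : IsUnit (expDifferential L y)) {n : WithTop ℕ∞} :
    ContDiffAt ℝ n (constCorrection L) y := by
  obtain ⟨u, hu⟩ := hy
  have hinv : ContDiffAt ℝ n (Ring.inverse : (g →L[ℝ] g) → g →L[ℝ] g) (expDifferential L y) :=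
    hu ▸ contDiffAt_ringInverse ℝ u
  have heval : ContDiffAt ℝ n (fun y => adEvolutionInv L (constPath y) 1) y :=
    ((evalCLM ℝ (1 : 𝕀) : C(𝕀, g →L[ℝ] g) →L[ℝ] g →L[ℝ] g).contDiff.comp
      (contDiff_adEvolutionInv_constPath L)).contDiffAt
  exact ((hinv.comp y (contDiff_expDifferential L).contDiffAt).clm_comp heval).neg

theorem expDifferential_constCorrection {y : g} (hy : IsUnit (expDifferential L y)) (c : g) :
    expDifferential L y (constCorrection L y c) = -adEvolutionInv L (constPath y) 1 c := by
  have h := congrArg (fun T : g →L[ℝ] g => T (adEvolutionInv L (constPath y) 1 c))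
    (Ring.mul_inverse_cancel _ hy)
  simpa [constCorrection] using h

theorem continuous_leftVariation_line :
    Continuous fun p : C(𝕀, g) × ℝ => leftVariation L (p.2 • p.1) p.1 1 :=
  (continuous_eval_const (1 : 𝕀)).comp (continuousOn_univ.1 (continuousOn_leftVariation L
    (continuous_snd.smul continuous_fst).continuousOn continuous_fst.continuousOn))

theorem eventually_norm_leftVariation_line_le {η : ℝ} (hη : 0 < η) :
    ∀ᶠ γ in 𝓝 (0 : C(𝕀, g)), ∀ s ∈ 𝕀, ‖leftVariation L (s • γ) γ 1‖ ≤ η := by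
  refine isCompact_Icc.eventually_forall_of_forall_eventually fun s _ => ?_
  refine ((continuous_leftVariation_line L).norm.tendsto (0, s)).eventually_le_const ?_
  simpa [leftVariation_zero] using hη

variable {L} (hL : IsLieBracket L.toLinearMap₁₂)
include hL

theorem isHorizontal_pathProd_constPath {γ : C(𝕀, g)} {y : ℝ → g}
    (hy : ∀ s ∈ 𝕀, HasDerivWithinAt y (constCorrection L (y s) (leftVariation L (s • γ) γ 1)) 𝕀 s)
    (hunit : ∀ s ∈ 𝕀, IsUnit (expDifferential L (y s))) :
    IsHorizontal L (fun s => pathProd L (s • γ) (constPath (y s)))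
      (fun s => pathProdDeriv L (s • γ) γ (constPath (y s))
        (constPath (constCorrection L (y s) (leftVariation L (s • γ) γ 1)))) where
  hasDerivWithinAt s hs := by
    have hline : HasDerivWithinAt (fun s : ℝ => s • γ) γ 𝕀 s := by
      simpa using ((hasDerivAt_id s).smul_const γ).hasDerivWithinAt
    exact hasDerivWithinAt_pathProd hL hline
      ((constPath (g := g)).hasFDerivAt.comp_hasDerivWithinAt s (hy s hs))
  continuousOn_deriv := by
    have hyc : ContinuousOn y 𝕀 := fun s hs => (hy s hs).continuousWithinAt
    have hline : ContinuousOn (fun s : ℝ => s • γ) 𝕀 := by fun_prop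
    have hvar : ContinuousOn (fun s : ℝ => leftVariation L (s • γ) γ 1) 𝕀 :=
      ((continuous_leftVariation_line L).comp (Continuous.prodMk_right γ)).continuousOn
    have hcorr : ContinuousOn (fun s => constCorrection L (y s)) 𝕀 := fun s hs =>
      (contDiffAt_constCorrection L (hunit s hs) (n := 0)).continuousAt.comp_continuousWithinAt
        (hyc s hs)
    exact continuousOn_pathProdDeriv L hline continuousOn_const
      (constPath.continuous.comp_continuousOn hyc)
      (constPath.continuous.comp_continuousOn (hcorr.clm_apply hvar))
  leftVariation_eq_zero s hs := by
    rw [leftVariation_pathProd hL, ContinuousMap.add_apply, pathApply_apply,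
      leftVariation_constPath, expDifferential_constCorrection L (hunit s hs), add_neg_cancel]

namespace PathGroup

/-- The constant path `x`, as an element of the path group. -/
noncomputable def const (x : g) : PathGroup hL := constPath x

theorem eventually_exists_mul_const_mem_horizontalSubgroup {U : Set g} (hU : U ∈ 𝓝 0) :
    ∀ᶠ γ in 𝓝 (1 : PathGroup hL), ∃ x ∈ U, γ * const hL x ∈ horizontalSubgroup hL := by
  obtain ⟨η, hη, hsol⟩ := exists_solution_of_small_control
    (contDiffAt_constCorrection L (by rw [expDifferential_zero]; exact isUnit_one))
    (inter_mem hU (eventually_isUnit_expDifferential L))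
  refine Eventually.mono (eventually_norm_leftVariation_line_le L hη) fun (γ : C(𝕀, g)) hγ => ?_
  obtain ⟨y, hy0, hy⟩ := hsol _
    ((continuous_leftVariation_line L).comp (Continuous.prodMk_right γ)).continuousOn hγ
  refine ⟨y 1, (hy 1 ⟨zero_le_one, le_rfl⟩).2.1, _, _, isHorizontal_pathProd_constPath hL
    (fun s hs => (hy s hs).1) (fun s hs => (hy s hs).2.2), ?_, ?_⟩
  · simp [hy0, pathProd_zero]
  · simp only [one_smul]
    rfl

end PathGroup

end ConstantPaths

section Quotient

open Filter
open scoped Topology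

theorem eventually_eq_of_exp_eq {𝔸 : Type*} [NormedRing 𝔸] [NormedAlgebra ℝ 𝔸] [CompleteSpace 𝔸] :
    ∀ᶠ p in 𝓝 (0 : 𝔸 × 𝔸), NormedSpace.exp p.1 = NormedSpace.exp p.2 → p.1 = p.2 := by
  have hexp : HasStrictFDerivAt NormedSpace.exp (ContinuousLinearEquiv.refl ℝ 𝔸 : 𝔸 →L[ℝ] 𝔸) 0 :=
    hasStrictFDerivAt_exp_zero
  filter_upwards [hexp.eventually_left_inverse.prod_nhds hexp.eventually_left_inverse]
    with p hp heq
  rw [← hp.1, ← hp.2, heq]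

namespace PathGroup

section Const

variable {g : Type*} [NormedAddCommGroup g] [NormedSpace ℝ g] [CompleteSpace g]
  {L : g →L[ℝ] g →L[ℝ] g} (hL : IsLieBracket L.toLinearMap₁₂)

omit [CompleteSpace g] in
protected theorem continuous_const : Continuous (const hL) :=
  (constPath (g := g)).continuous

theorem const_zero : const hL 0 = 1 :=
  map_zero constPath

theorem const_add_of_lie_eq_zero {x y : g} (hxy : L x y = 0) :
    const hL (x + y) = const hL x * const hL y := by
  refine ContinuousMap.ext fun t => ?_
  change x + y = x + adEvolution L (constPath x) t y
  rw [adEvolution_apply_of_forall_eq_zero L fun _ => hxy]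

theorem const_neg (x : g) : const hL (-x) = (const hL x)⁻¹ := by
  refine eq_inv_of_mul_eq_one_right ?_
  rw [← const_add_of_lie_eq_zero hL (by simpa using hL.1 x), add_neg_cancel, const_zero]

/-- The endpoint `A_γ(1)` of the adjoint evolution, as a representation of the path group. It is
trivial on the closure of `P(g)₀`. -/
noncomputable def adHolonomy : PathGroup hL →* (g →L[ℝ] g) where
  toFun γ := adEvolution L γ 1
  map_one' := by
    change adEvolution L (0 : C(𝕀, g)) 1 = 1
    rw [adEvolution_zero, ContinuousMap.one_apply]
  map_mul' γ δ := congrArg (fun Φ : C(𝕀, g →L[ℝ] g) => Φ 1) (adEvolution_pathProd hL γ δ)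

theorem adHolonomy_const (x : g) : adHolonomy hL (const hL x) = NormedSpace.exp (L x) := by
  have h : adPath L (constPath x) = ContinuousMap.const 𝕀 (L x) := rfl
  change (evolution (adPath L (constPath x)) : C(𝕀, g →L[ℝ] g)) 1 = _
  rw [h, evolution_const_apply, Set.Icc.coe_one, one_smul]

/-- The central elements of the Lie algebra whose constant path lies in the closure of `P(g)₀`. -/
def centralKernel : AddSubgroup g where
  carrier := {z | L z = 0 ∧ const hL z ∈ (horizontalSubgroup hL).topologicalClosure}
  zero_mem' := ⟨map_zero L, by rw [const_zero]; exact one_mem _⟩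
  add_mem' := by
    rintro y z ⟨hy, hyN⟩ ⟨hz, hzN⟩
    refine ⟨by rw [map_add, hy, hz, add_zero], ?_⟩
    rw [const_add_of_lie_eq_zero hL (by simp [hy])]
    exact mul_mem hyN hzN
  neg_mem' := by
    rintro z ⟨hz, hzN⟩
    exact ⟨by rw [map_neg, hz, neg_zero], by rw [const_neg]; exact inv_mem hzN⟩

theorem isClosed_centralKernel : IsClosed (centralKernel hL : Set g) :=
  (isClosed_eq L.continuous continuous_const).inter
    ((horizontalSubgroup hL).isClosed_topologicalClosure.preimage (PathGroup.continuous_const hL))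

theorem eventually_sub_mem_centralKernel :
    ∀ᶠ p in 𝓝 (0 : g × g),
      const hL p.1 / const hL p.2 ∈ (horizontalSubgroup hL).topologicalClosure →
        p.1 - p.2 ∈ centralKernel hL := by
  have hLL : Tendsto (fun p : g × g => (L p.1, L p.2)) (𝓝 0) (𝓝 0) :=
    (L.continuous.prodMap L.continuous).tendsto' _ _ (by simp [Prod.map])
  filter_upwards [hLL.eventually eventually_eq_of_exp_eq] with p hexp hp
  have hhol : adHolonomy hL (const hL p.1) = adHolonomy hL (const hL p.2) :=
    (adHolonomy hL).div_mem_ker_iff.1 (adEvolution_apply_one_of_mem hL hp)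
  rw [adHolonomy_const, adHolonomy_const] at hhol
  have hcentral : L (p.1 - p.2) = 0 := by rw [map_sub, hexp hhol, sub_self]
  refine ⟨hcentral, ?_⟩
  rwa [← sub_add_cancel p.1 p.2, const_add_of_lie_eq_zero hL (by rw [hcentral]; rfl),
    mul_div_cancel_right] at hp

theorem nhds_le_map_hausdorffQuotientMap_const :
    𝓝 (hausdorffQuotientMap (horizontalSubgroup hL) (const hL 0)) ≤
      map (hausdorffQuotientMap (horizontalSubgroup hL) ∘ const hL) (𝓝 0) := by
  set π := hausdorffQuotientMap (horizontalSubgroup hL)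
  rw [const_zero]
  refine ((isOpenQuotientMap_hausdorffQuotientMap _).isOpenMap.nhds_le 1).trans fun S hS => ?_
  have hS0 : ∀ᶠ x in 𝓝 (0 : g), π (const hL x) ∈ S := hS
  have hS' : {x | π (const hL (-x)) ∈ S} ∈ 𝓝 (0 : g) :=
    (continuous_neg.tendsto' (0 : g) 0 neg_zero).eventually hS0
  rw [mem_map]
  filter_upwards [eventually_exists_mul_const_mem_horizontalSubgroup hL hS']
  rintro γ ⟨x, hx, hγx⟩
  have hker : γ * const hL x ∈ π.ker := by
    rw [ker_hausdorffQuotientMap]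
    exact Subgroup.le_topologicalClosure _ hγx
  rw [const_neg, map_inv, ← eq_inv_of_mul_eq_one_left ((map_mul π _ _).symm.trans hker)] at hx
  exact hx

end Const

variable {g : Type*} [NormedAddCommGroup g] [NormedSpace ℝ g] [FiniteDimensional ℝ g]
  [CompleteSpace g] {L : g →L[ℝ] g →L[ℝ] g} (hL : IsLieBracket L.toLinearMap₁₂)

theorem hasLocalSectionAt_hausdorffQuotientMap :
    HasLocalSectionAt (hausdorffQuotientMap (horizontalSubgroup hL)) 1 := by
  have hπ := isOpenQuotientMap_hausdorffQuotientMap (horizontalSubgroup hL)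
  have hsection : HasLocalSectionAt (hausdorffQuotientMap (horizontalSubgroup hL) ∘ const hL)
      (hausdorffQuotientMap (horizontalSubgroup hL) (const hL 0)) := by
    refine hasLocalSectionAt_of_addSubgroup (hπ.continuous.comp (PathGroup.continuous_const hL))
      (isClosed_centralKernel hL) ?_ ?_ (nhds_le_map_hausdorffQuotientMap_const hL)
    · rintro z ⟨hz, hzN⟩ x
      rw [← ker_hausdorffQuotientMap] at hzN
      simp only [Function.comp_apply]
      rw [const_add_of_lie_eq_zero hL (by rw [hz]; rfl), map_mul, hzN, one_mul]
    · filter_upwards [eventually_sub_mem_centralKernel hL] with p hp heq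
      refine hp ?_
      rwa [← ker_hausdorffQuotientMap, MonoidHom.div_mem_ker_iff]
  rw [const_zero, map_one] at hsection
  exact hsection.of_comp (PathGroup.continuous_const hL)

theorem eventually_mem_linealitySpace_centralKernel :
    ∀ᶠ x in 𝓝 (0 : g), const hL x ∈ (horizontalSubgroup hL).topologicalClosure →
      x ∈ linealitySpace (centralKernel hL) := by
  have hpair : Tendsto (fun x : g => (x, (0 : g))) (𝓝 0) (𝓝 0) :=
    (Continuous.prodMk_left (0 : g)).tendsto 0
  filter_upwards [hpair.eventually (eventually_sub_mem_centralKernel hL),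
    eventually_mem_imp_mem_linealitySpace (isClosed_centralKernel hL)] with x hx hlin hxN
  refine hlin ?_
  simpa only [sub_zero] using hx (by simpa only [const_zero, div_one] using hxN)

theorem isPathConnected_topologicalClosure_horizontalSubgroup :
    IsPathConnected ((horizontalSubgroup hL).topologicalClosure : Set (PathGroup hL)) := by
  set N := horizontalSubgroup hL
  refine ⟨1, one_mem _, fun {γ} hγ => ?_⟩
  have hslice : ∀ᶠ n in 𝓝 γ, ∃ x, (const hL x ∈ N.topologicalClosure →
      x ∈ linealitySpace (centralKernel hL)) ∧ n⁻¹ * γ * const hL x ∈ N :=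
    (show Continuous fun n : PathGroup hL => n⁻¹ * γ by fun_prop).tendsto' γ 1 (inv_mul_cancel γ)
      |>.eventually (eventually_exists_mul_const_mem_horizontalSubgroup hL
        (eventually_mem_linealitySpace_centralKernel hL))
  obtain ⟨n, ⟨x, hx, hnx⟩, hn⟩ := mem_closure_iff_nhds.1 hγ _ hslice
  have hm : γ * const hL x ∈ N := by simpa [mul_assoc] using mul_mem hn hnx
  have hxN : const hL x ∈ N.topologicalClosure := by
    simpa using mul_mem (inv_mem hγ) (N.le_topologicalClosure hm)
  have hjoin : JoinedIn N.topologicalClosure γ (γ * const hL x) :=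
    ⟨⟨⟨fun s => γ * const hL ((s : ℝ) • x), continuous_const.mul
      ((PathGroup.continuous_const hL).comp (continuous_subtype_val.smul continuous_const))⟩,
      by simp [const_zero], by simp⟩, fun s => mul_mem hγ (hx hxN s).2⟩
  exact ((isPathConnected_horizontalSubgroup hL).joinedIn 1 (one_mem N) _ hm).mono
    N.le_topologicalClosure |>.trans hjoin.symm

theorem simplyConnectedSpace_quotient_horizontalSubgroup :
    SimplyConnectedSpace (PathGroup hL ⧸ horizontalSubgroup hL) :=
  simplyConnectedSpace_quotient _ (isPathConnected_topologicalClosure_horizontalSubgroup hL)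
    (hasLocalSectionAt_hausdorffQuotientMap hL)

end PathGroup

end Quotient

section Transport

open ContinuousMap

variable {g : Type*} [NormedAddCommGroup g] [NormedSpace ℝ g] [FiniteDimensional ℝ g]
  [CompleteSpace g] {L : g →L[ℝ] g →L[ℝ] g}

theorem isTransport_adEvolution (γ : C(𝕀, g)) :
    IsTransport L.toLinearMap₁₂ (pathExt γ) (pathExt (adEvolution L γ)) := by
  refine ⟨(pathExt_coe _ (0 : 𝕀)).trans (evolution_apply_zero _), fun t ht => ?_, ?_⟩
  · rw [pathExt_of_mem γ ht, pathExt_of_mem _ ht]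
    exact hasPathDeriv_adEvolution L γ ⟨t, ht⟩
  · exact ((L.continuous.comp (continuous_pathExt γ)).clm_comp
      (continuous_pathExt (adEvolution L γ))).continuousOn

theorem IsTransport.apply_eq_adEvolution {γ : C(𝕀, g)} {A : ℝ → g →L[ℝ] g}
    (hA : IsTransport L.toLinearMap₁₂ (pathExt γ) A) (t : 𝕀) : A t = adEvolution L γ t := by
  obtain ⟨hA0, hA', -⟩ := hA
  have hcont : ContinuousOn A 𝕀 := fun t ht => (hA' t ht).continuousWithinAt
  let A₁ : C(𝕀, g →L[ℝ] g) := ⟨_, hcont.domRestrict⟩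
  have hderiv : HasPathDeriv A₁ (adPath L γ * A₁) := fun t => by
    have h := hA' t t.2
    rw [pathExt_coe] at h
    exact h.congr (fun s hs => pathExt_of_mem A₁ hs) (pathExt_coe A₁ t)
  exact congrArg (fun Φ : C(𝕀, g →L[ℝ] g) => Φ t) (hderiv.eq_evolution hA0)

theorem transport_pathExt (γ : C(𝕀, g)) (t : 𝕀) :
    transport L.toLinearMap₁₂ (pathExt γ) t = adEvolution L γ t := by
  have hex : ∃ A, IsTransport L.toLinearMap₁₂ (pathExt γ) A := ⟨_, isTransport_adEvolution γ⟩
  rw [transport, dif_pos hex]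
  exact hex.choose_spec.apply_eq_adEvolution t

theorem inverse_transport_pathExt (γ : C(𝕀, g)) (t : 𝕀) :
    Ring.inverse (transport L.toLinearMap₁₂ (pathExt γ) t) = adEvolutionInv L γ t := by
  rw [transport_pathExt]
  exact Ring.inverse_unit
    (Units.map ((Pi.evalMonoidHom _ t).comp coeFnMonoidHom) (evolution (adPath L γ)))

theorem coe_pathProd (γ δ : C(𝕀, g)) : ⇑(pathProd L γ δ) = pathMul L.toLinearMap₁₂ γ δ := by
  ext t
  rw [pathMul, transport_pathExt, pathProd_apply]

theorem coe_neg_pathApply_adEvolutionInv (γ : C(𝕀, g)) :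
    ⇑(-pathApply (adEvolutionInv L γ) γ) = pathInv L.toLinearMap₁₂ γ := by
  ext t
  rw [pathInv, inverse_transport_pathExt]
  rfl

theorem integral_inverse_transport (γ v : C(𝕀, g)) :
    ∫ t in (0 : ℝ)..1, Ring.inverse (transport L.toLinearMap₁₂ (pathExt γ) t) (pathExt v t) =
      leftVariation L γ v 1 := by
  refine intervalIntegral.integral_congr fun t ht => ?_
  rw [Set.uIcc_of_le zero_le_one] at ht
  simp only [pathExt_of_mem _ ht]
  rw [inverse_transport_pathExt γ ⟨t, ht⟩, pathApply_apply]

variable (hL : IsLieBracket L.toLinearMap₁₂)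

namespace PathGroup

theorem mem_horizontalSubgroup_iff_inPathZero {γ : PathGroup hL} :
    γ ∈ horizontalSubgroup hL ↔ InPathZero L.toLinearMap₁₂ γ := by
  simp only [InPathZero, integral_inverse_transport]
  constructor
  · rintro ⟨Γ, Γ', ⟨hΓ, hΓ', hvar⟩, hΓ0, hΓ1⟩
    exact ⟨Γ, Γ', hΓ, hΓ', hΓ0, hΓ1, hvar⟩
  · rintro ⟨Γ, Γ', hΓ, hΓ', hΓ0, hΓ1, hvar⟩
    exact ⟨Γ, Γ', ⟨hΓ, hΓ', hvar⟩, hΓ0, hΓ1⟩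

theorem eq_mul_of_forall_eq_pathMul {γ δ : PathGroup hL} {m : C(𝕀, g)}
    (h : ∀ t, m t = pathMul L.toLinearMap₁₂ γ δ t) : m = (γ * δ : PathGroup hL) :=
  DFunLike.coe_injective ((funext h).trans (coe_pathProd γ δ).symm)

theorem eq_inv_of_forall_eq_pathInv {γ : PathGroup hL} {ι : C(𝕀, g)}
    (h : ∀ t, ι t = pathInv L.toLinearMap₁₂ γ t) : ι = (γ⁻¹ : PathGroup hL) :=
  DFunLike.coe_injective ((funext h).trans (coe_neg_pathApply_adEvolutionInv γ).symm)

theorem pathRel_eq_leftRel :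
    pathRel L.toLinearMap₁₂ = QuotientGroup.leftRel (horizontalSubgroup hL) := by
  refine funext₂ fun (γ δ : PathGroup hL) => propext ?_
  rw [QuotientGroup.leftRel_apply, ← inv_mem_iff, mul_inv_rev, inv_inv,
    Subgroup.Normal.mem_comm_iff inferInstance, mem_horizontalSubgroup_iff_inPathZero]
  constructor
  · rintro ⟨ι, m, hι, hm, hmem⟩
    rwa [← eq_inv_of_forall_eq_pathInv hL hι, ← eq_mul_of_forall_eq_pathMul hL hm]
  · exact fun h => ⟨_, _, congrFun (coe_neg_pathApply_adEvolutionInv δ),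
      congrFun (coe_pathProd γ _), h⟩

end PathGroup

end Transport

/-- The quotient group `P(g)/P(g)₀`, with the quotient topology induced from the
supremum-norm topology on `P(g) = C([0,1], g)`, is a simply connected topological
group: the path multiplication and inversion descend to the quotient, satisfy the
group axioms with identity the class of the constant path `0`, are continuous,
and the quotient space is simply connected. -/
theorem pathQuotient_simplyConnected_topologicalGroup {g : Type*}
    [NormedAddCommGroup g] [NormedSpace ℝ g] [FiniteDimensional ℝ g]
    (B : g →ₗ[ℝ] g →ₗ[ℝ] g) (hB : IsLieBracket B) :
    ∃ (mul : Quot (pathRel B) → Quot (pathRel B) → Quot (pathRel B))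
      (inv : Quot (pathRel B) → Quot (pathRel B)),
      -- `mul` and `inv` descend the path group operations
      (∀ γ δ m : C(Set.Icc (0:ℝ) 1, g), (∀ t, m t = pathMul B γ δ t) →
        mul (Quot.mk (pathRel B) γ) (Quot.mk (pathRel B) δ) = Quot.mk (pathRel B) m) ∧
      (∀ γ ι : C(Set.Icc (0:ℝ) 1, g), (∀ t, ι t = pathInv B γ t) →
        inv (Quot.mk (pathRel B) γ) = Quot.mk (pathRel B) ι) ∧
      -- group axioms
      (∀ a b c : Quot (pathRel B), mul (mul a b) c = mul a (mul b c)) ∧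
      (∀ a, mul (Quot.mk (pathRel B) 0) a = a) ∧
      (∀ a, mul a (Quot.mk (pathRel B) 0) = a) ∧
      (∀ a, mul (inv a) a = Quot.mk (pathRel B) 0) ∧
      (∀ a, mul a (inv a) = Quot.mk (pathRel B) 0) ∧
      -- the operations are continuous for the quotient topology
      Continuous (fun p : Quot (pathRel B) × Quot (pathRel B) => mul p.1 p.2) ∧
      Continuous inv ∧
      -- and the quotient is simply connected
      SimplyConnectedSpace (Quot (pathRel B)) := by
  have : CompleteSpace g := FiniteDimensional.complete ℝ g
  obtain ⟨L, rfl⟩ : ∃ L : g →L[ℝ] g →L[ℝ] g, L.toLinearMap₁₂ = B :=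
    ⟨LinearMap.toContinuousBilinearMap B, rfl⟩
  let Q := PathGroup hB ⧸ PathGroup.horizontalSubgroup hB
  let mul : Q → Q → Q := (· * ·)
  let inv : Q → Q := (·⁻¹)
  have hmul (γ δ m : C(𝕀, g)) (h : ∀ t, m t = pathMul L.toLinearMap₁₂ γ δ t) :
      mul (Quot.mk _ γ) (Quot.mk _ δ) = Quot.mk _ m :=
    congrArg QuotientGroup.mk (PathGroup.eq_mul_of_forall_eq_pathMul hB h).symm
  have hinv (γ ι : C(𝕀, g)) (h : ∀ t, ι t = pathInv L.toLinearMap₁₂ γ t) :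
      inv (Quot.mk _ γ) = Quot.mk _ ι :=
    congrArg QuotientGroup.mk (PathGroup.eq_inv_of_forall_eq_pathInv hB h).symm
  rw [PathGroup.pathRel_eq_leftRel hB]
  exact ⟨mul, inv, hmul, hinv, mul_assoc (G := Q), one_mul (M := Q), mul_one (M := Q),
    inv_mul_cancel (G := Q), mul_inv_cancel (G := Q), continuous_mul (M := Q),
    continuous_inv (G := Q), PathGroup.simplyConnectedSpace_quotient_horizontalSubgroup hB⟩
end

section
/- (Archimedes; special case of the Duistermaat–Heckman theorem.) The 2-dimensional Hausdorff measure of the unit sphere S = {p ∈ ℝ³ : p₁² + p₂² + p₃² = 1} is equal to the 2-dimensional Hausdorff measure of the lateral surface of the circumscribed cylinder C = {p ∈ ℝ³ : p₁² + p₂² = 1, −1 ≤ p₃ ≤ 1}. -/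
open MeasureTheory

/-!
The sphere and the cylinder are both surfaces of revolution
`(θ, z) ↦ (ρ z cos θ, ρ z sin θ, z)`, with `ρ z = √(1 - z²)` and `ρ z = 1` respectively. The
Jacobian of this parametrization is `ρ √(1 + ρ'²)`, which is identically `1` for both profiles, so
both parametrizations preserve area. An injective map with constant Jacobian `J ≠ 0` multiplies
Hausdorff measure by `J`, because on small pieces it is bi-Lipschitz close to its derivative, with
constant as close to `1` as desired.
-/

section AreaFormula

open Set Filter Module
open scoped NNReal ENNReal Topology Function

theorem ennreal_le_of_forall_one_lt_le_pow_mul {a b : ℝ≥0∞} (n : ℕ)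
    (h : ∀ c : ℝ≥0, 1 < c → a ≤ c ^ n * b) : a ≤ b := by
  have hcont : Continuous fun c : ℝ≥0 => (c : ℝ≥0∞) ^ n := by fun_prop
  have hlim : Tendsto (fun c : ℝ≥0 => (c : ℝ≥0∞) ^ n * b) (𝓝[>] 1) (𝓝 b) := by
    simpa using ENNReal.Tendsto.mul_const (b := b)
      (hcont.continuousAt.mono_left (nhdsWithin_le_nhds (a := 1) (s := Ioi 1))) (Or.inl (by simp))
  exact ge_of_tendsto hlim (eventually_mem_nhdsWithin.mono h)

theorem hausdorffMeasure_image_le_of_edist_le {α X Y : Type*}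
    [EMetricSpace X] [MeasurableSpace X] [BorelSpace X]
    [EMetricSpace Y] [MeasurableSpace Y] [BorelSpace Y]
    {φ : α → X} {ψ : α → Y} {t : Set α} {K : ℝ≥0} {d : ℝ} (hd : 0 ≤ d)
    (h : ∀ y ∈ t, ∀ z ∈ t, edist (φ y) (φ z) ≤ K * edist (ψ y) (ψ z)) :
    μH[d] (φ '' t) ≤ (K : ℝ≥0∞) ^ d * μH[d] (ψ '' t) := by
  rcases t.eq_empty_or_nonempty with rfl | ⟨a, -⟩
  · simp
  obtain ⟨k, hk⟩ : ∃ k : Y → X, ∀ y ∈ t, k (ψ y) = φ y := by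
    have hfactors : (φ ∘ Subtype.val : t → X).FactorsThrough (ψ ∘ Subtype.val) := by
      intro y z hyz
      have := h y y.2 z z.2
      simpa [show ψ y = ψ z from hyz] using this
    exact ⟨_, fun y hy => hfactors.extend_apply (fun _ => φ a) ⟨y, hy⟩⟩
  have hlip : LipschitzOnWith K k (ψ '' t) := by
    rintro _ ⟨y, hy, rfl⟩ _ ⟨z, hz, rfl⟩
    rw [hk y hy, hk z hz]
    exact h y hy z hz
  calc μH[d] (φ '' t) = μH[d] (k '' (ψ '' t)) := by rw [image_image, image_congr hk]
    _ ≤ (K : ℝ≥0∞) ^ d * μH[d] (ψ '' t) := hlip.hausdorffMeasure_image_le hd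

section Approximation

variable {E F : Type*} [NormedAddCommGroup E] [NormedSpace ℝ E] [FiniteDimensional ℝ E]
  [NormedAddCommGroup F] [NormedSpace ℝ F]

theorem exists_edist_le_mul_of_approximatesLinearOn {A : E →L[ℝ] F} (hA : A.ker = ⊥)
    {c : ℝ≥0} (hc : 1 < c) :
    ∃ δ : ℝ≥0, δ ≠ 0 ∧ ∀ (f : E → F) (t : Set E), ApproximatesLinearOn f A t δ →
      ∀ y ∈ t, ∀ z ∈ t, edist (f y) (f z) ≤ c * edist (A y) (A z) ∧
        edist (A y) (A z) ≤ c * edist (f y) (f z) := by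
  obtain ⟨K, hK0, hK⟩ := A.toLinearMap.exists_antilipschitzWith hA
  have hcinv : c⁻¹ < 1 := inv_lt_one_of_one_lt₀ hc
  refine ⟨(1 - c⁻¹) / K, (div_pos (tsub_pos_of_lt hcinv) hK0).ne', fun f t hf y hy z hz => ?_⟩
  have herror : ‖f y - f z - A (y - z)‖ ≤ (1 - (c : ℝ)⁻¹) * ‖A (y - z)‖ := by
    have hyz : ‖y - z‖ ≤ K * ‖A (y - z)‖ := by
      simpa only [dist_eq_norm, ContinuousLinearMap.coe_coe, map_sub] using hK.le_mul_dist y z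
    calc ‖f y - f z - A (y - z)‖ ≤ ((1 - c⁻¹) / K : ℝ≥0) * ‖y - z‖ := hf y hy z hz
      _ ≤ ((1 - c⁻¹) / K : ℝ≥0) * (K * ‖A (y - z)‖) := by gcongr
      _ = (1 - (c : ℝ)⁻¹) * ‖A (y - z)‖ := by
        rw [NNReal.coe_div, NNReal.coe_sub hcinv.le, NNReal.coe_one, NNReal.coe_inv,
          ← mul_assoc, div_mul_cancel₀ _ (NNReal.coe_pos.2 hK0).ne']
  have hc' : (1 : ℝ) < c := hc
  have hsum : 1 + (1 - (c : ℝ)⁻¹) ≤ c := by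
    have hmul : (c : ℝ) * (c : ℝ)⁻¹ = 1 := mul_inv_cancel₀ (zero_lt_one.trans hc').ne'
    have hinv : (0 : ℝ) < (c : ℝ)⁻¹ := inv_pos.2 (zero_lt_one.trans hc')
    nlinarith [sq_nonneg ((c : ℝ) - 1)]
  rw [← ENNReal.ofReal_coe_nnreal, edist_dist, edist_dist, ← ENNReal.ofReal_mul c.coe_nonneg,
    ← ENNReal.ofReal_mul c.coe_nonneg, dist_eq_norm, dist_eq_norm, ← map_sub]
  constructor <;> apply ENNReal.ofReal_le_ofReal
  · calc ‖f y - f z‖ ≤ ‖A (y - z)‖ + ‖f y - f z - A (y - z)‖ := norm_le_norm_add_norm_sub' _ _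
      _ ≤ (1 + (1 - (c : ℝ)⁻¹)) * ‖A (y - z)‖ := by linarith
      _ ≤ c * ‖A (y - z)‖ := by gcongr
  · rw [← inv_mul_le_iff₀ (zero_lt_one.trans hc')]
    linarith [norm_le_norm_add_norm_sub (f y - f z) (A (y - z))]

theorem exists_partition_edist_le_mul [SecondCountableTopology F]
    [MeasurableSpace E] [BorelSpace E] {f : E → F} {f' : E → E →L[ℝ] F} {s : Set E}
    (hne : s.Nonempty) (hs : MeasurableSet s) (hf : ∀ x ∈ s, HasFDerivWithinAt f (f' x) s x)
    (hker : ∀ x ∈ s, (f' x).ker = ⊥) {c : ℝ≥0} (hc : 1 < c) :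
    ∃ (t : ℕ → Set E) (x : ℕ → E), Pairwise (Disjoint on t) ∧ (∀ n, MeasurableSet (t n)) ∧
      ⋃ n, t n = s ∧ (∀ n, x n ∈ s) ∧ ∀ n, ∀ y ∈ t n, ∀ z ∈ t n,
        edist (f y) (f z) ≤ c * edist (f' (x n) y) (f' (x n) z) ∧
          edist (f' (x n) y) (f' (x n) z) ≤ c * edist (f y) (f z) := by
  have hδ : ∀ A : E →L[ℝ] F, ∃ δ : ℝ≥0, δ ≠ 0 ∧ (A.ker = ⊥ → ∀ t, ApproximatesLinearOn f A t δ →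
      ∀ y ∈ t, ∀ z ∈ t, edist (f y) (f z) ≤ c * edist (A y) (A z) ∧
        edist (A y) (A z) ≤ c * edist (f y) (f z)) := by
    intro A
    by_cases hA : A.ker = ⊥
    · obtain ⟨δ, hδ0, hδ⟩ := exists_edist_le_mul_of_approximatesLinearOn hA hc
      exact ⟨δ, hδ0, fun _ => hδ f⟩
    · exact ⟨1, one_ne_zero, fun h => absurd h hA⟩
  choose δ hδ0 hδ using hδ
  obtain ⟨t, A, tdisj, tmeas, tcov, tapprox, tA⟩ :=
    exists_partition_approximatesLinearOn_of_hasFDerivWithinAt f s f' hf δ hδ0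
  choose x hxs hxA using tA hne
  refine ⟨fun n => s ∩ t n, x, fun m n hmn => (tdisj hmn).mono inter_subset_right
    inter_subset_right, fun n => hs.inter (tmeas n), ?_, hxs, fun n => ?_⟩
  · rw [← inter_iUnion, inter_eq_left.2 tcov]
  · rw [← hxA n]
    exact hδ (A n) (hxA n ▸ hker _ (hxs n)) _ (tapprox n)

end Approximation

variable {E F : Type*} [NormedAddCommGroup E] [InnerProductSpace ℝ E] [FiniteDimensional ℝ E]
  [MeasurableSpace E] [BorelSpace E] [NormedAddCommGroup F] [InnerProductSpace ℝ F]
  [SecondCountableTopology F] [MeasurableSpace F] [BorelSpace F]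
  {f : E → F} {f' : E → E →L[ℝ] F} {s : Set E} {J : ℝ}

theorem hausdorffMeasure_image_le_of_normDet_eq (hs : MeasurableSet s)
    (hf : ∀ x ∈ s, HasFDerivWithinAt f (f' x) s x) (hJ0 : J ≠ 0)
    (hJ : ∀ x ∈ s, (f' x).toLinearMap.normDet = J) :
    μH[finrank ℝ E] (f '' s) ≤ ENNReal.ofReal J * μH[finrank ℝ E] s := by
  rcases s.eq_empty_or_nonempty with rfl | hne
  · simp
  have hker : ∀ x ∈ s, (f' x).ker = ⊥ := fun x hx =>
    not_not.1 <| mt LinearMap.normDet_eq_zero_iff_ker_ne_bot.2 ((hJ x hx).trans_ne hJ0)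
  refine ennreal_le_of_forall_one_lt_le_pow_mul (finrank ℝ E) fun c hc => ?_
  obtain ⟨t, x, tdisj, tmeas, tcov, hx, hbound⟩ := exists_partition_edist_le_mul hne hs hf hker hc
  have hpiece (n : ℕ) : μH[finrank ℝ E] (f '' t n) ≤
      (c : ℝ≥0∞) ^ finrank ℝ E * (ENNReal.ofReal J * μH[finrank ℝ E] (t n)) := by
    have himage := hausdorffMeasure_image_le_of_edist_le (finrank ℝ E).cast_nonneg
      fun y hy z hz => (hbound n y hy z hz).1
    have hlinear := (f' (x n)).toLinearMap.hausdorffMeasure_image (t n)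
    rw [hJ _ (hx n)] at hlinear
    rwa [ENNReal.rpow_natCast, ← ContinuousLinearMap.coe_coe, hlinear] at himage
  calc μH[finrank ℝ E] (f '' s) = μH[finrank ℝ E] (⋃ n, f '' t n) := by rw [← image_iUnion, tcov]
    _ ≤ ∑' n, μH[finrank ℝ E] (f '' t n) := measure_iUnion_le _
    _ ≤ ∑' n, (c : ℝ≥0∞) ^ finrank ℝ E * (ENNReal.ofReal J * μH[finrank ℝ E] (t n)) :=
      ENNReal.tsum_le_tsum hpiece
    _ = (c : ℝ≥0∞) ^ finrank ℝ E * (ENNReal.ofReal J * μH[finrank ℝ E] s) := by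
      rw [ENNReal.tsum_mul_left, ENNReal.tsum_mul_left, ← measure_iUnion tdisj tmeas, tcov]

theorem le_hausdorffMeasure_image_of_normDet_eq (hs : MeasurableSet s)
    (hf : ∀ x ∈ s, HasFDerivWithinAt f (f' x) s x) (hinj : InjOn f s) (hJ0 : J ≠ 0)
    (hJ : ∀ x ∈ s, (f' x).toLinearMap.normDet = J) :
    ENNReal.ofReal J * μH[finrank ℝ E] s ≤ μH[finrank ℝ E] (f '' s) := by
  rcases s.eq_empty_or_nonempty with rfl | hne
  · simp
  have hker : ∀ x ∈ s, (f' x).ker = ⊥ := fun x hx =>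
    not_not.1 <| mt LinearMap.normDet_eq_zero_iff_ker_ne_bot.2 ((hJ x hx).trans_ne hJ0)
  have hcont : ContinuousOn f s := fun x hx => (hf x hx).continuousWithinAt
  refine ennreal_le_of_forall_one_lt_le_pow_mul (finrank ℝ E) fun c hc => ?_
  obtain ⟨t, x, tdisj, tmeas, tcov, hx, hbound⟩ := exists_partition_edist_le_mul hne hs hf hker hc
  have hts (n : ℕ) : t n ⊆ s := tcov ▸ subset_iUnion t n
  have hpiece (n : ℕ) : ENNReal.ofReal J * μH[finrank ℝ E] (t n) ≤
      (c : ℝ≥0∞) ^ finrank ℝ E * μH[finrank ℝ E] (f '' t n) := by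
    have himage := hausdorffMeasure_image_le_of_edist_le (finrank ℝ E).cast_nonneg
      fun y hy z hz => (hbound n y hy z hz).2
    have hlinear := (f' (x n)).toLinearMap.hausdorffMeasure_image (t n)
    rw [hJ _ (hx n)] at hlinear
    rwa [ENNReal.rpow_natCast, ← ContinuousLinearMap.coe_coe, hlinear] at himage
  have hdisj : Pairwise (Disjoint on fun n => f '' t n) := fun m n hmn =>
    disjoint_image_image fun y hy z hz hyz =>
      (tdisj hmn).ne_of_mem hy hz (hinj (hts m hy) (hts n hz) hyz)
  have hmeas (n : ℕ) : MeasurableSet (f '' t n) :=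
    (tmeas n).image_of_continuousOn_injOn (hcont.mono (hts n)) (hinj.mono (hts n))
  calc ENNReal.ofReal J * μH[finrank ℝ E] s
      = ∑' n, ENNReal.ofReal J * μH[finrank ℝ E] (t n) := by
        rw [ENNReal.tsum_mul_left, ← measure_iUnion tdisj tmeas, tcov]
    _ ≤ ∑' n, (c : ℝ≥0∞) ^ finrank ℝ E * μH[finrank ℝ E] (f '' t n) :=
      ENNReal.tsum_le_tsum hpiece
    _ = (c : ℝ≥0∞) ^ finrank ℝ E * μH[finrank ℝ E] (f '' s) := by
      rw [ENNReal.tsum_mul_left, ← measure_iUnion hdisj hmeas, ← image_iUnion, tcov]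

theorem hausdorffMeasure_image_of_normDet_eq (hs : MeasurableSet s)
    (hf : ∀ x ∈ s, HasFDerivWithinAt f (f' x) s x) (hinj : InjOn f s) (hJ0 : J ≠ 0)
    (hJ : ∀ x ∈ s, (f' x).toLinearMap.normDet = J) :
    μH[finrank ℝ E] (f '' s) = ENNReal.ofReal J * μH[finrank ℝ E] s :=
  (hausdorffMeasure_image_le_of_normDet_eq hs hf hJ0 hJ).antisymm
    (le_hausdorffMeasure_image_of_normDet_eq hs hf hinj hJ0 hJ)

end AreaFormula

section SurfaceOfRevolution

open Set Module
open scoped Real RealInnerProductSpace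

/-- The linear map `(u, v) ↦ u a + v b`, that is, the differential of a parametrized surface with
partial derivatives `a` and `b`. -/
noncomputable def linearMapOfColumns {F : Type*} [NormedAddCommGroup F] [NormedSpace ℝ F]
    (a b : F) : EuclideanSpace ℝ (Fin 2) →L[ℝ] F :=
  (EuclideanSpace.proj 0 : EuclideanSpace ℝ (Fin 2) →L[ℝ] ℝ).smulRight a +
    (EuclideanSpace.proj 1 : EuclideanSpace ℝ (Fin 2) →L[ℝ] ℝ).smulRight b

theorem normDet_linearMapOfColumns_sq {F : Type*} [NormedAddCommGroup F] [InnerProductSpace ℝ F]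
    (a b : F) :
    (linearMapOfColumns a b).toLinearMap.normDet ^ 2 = ‖a‖ ^ 2 * ‖b‖ ^ 2 - ⟪a, b⟫ ^ 2 := by
  have hgram := (linearMapOfColumns a b).toLinearMap.normDet_sq_eq_det_gram
    (EuclideanSpace.basisFun (Fin 2) ℝ)
  simpa [linearMapOfColumns, Matrix.det_fin_two, Matrix.gram_apply, real_inner_comm a b, ← sq]
    using hgram

/-- The part with height in `I` of the surface obtained by revolving the graph of the radius
function `ρ` about the third coordinate axis. -/
def surfaceOfRevolution (ρ : ℝ → ℝ) (I : Set ℝ) : Set (EuclideanSpace ℝ (Fin 3)) :=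
  {p | p 0 ^ 2 + p 1 ^ 2 = ρ (p 2) ^ 2 ∧ p 2 ∈ I}

/-- The strip of pairs (angle, height) with height in `I` that parametrizes a surface of revolution.
The angle lies in `(-π, π]`, the range of `Complex.arg`. -/
def angleHeightStrip (I : Set ℝ) : Set (EuclideanSpace ℝ (Fin 2)) :=
  {x | x 0 ∈ Ioc (-π) π ∧ x 1 ∈ I}

/-- The parametrization of a surface of revolution by angle and height. -/
noncomputable def revolve (ρ : ℝ → ℝ) (x : EuclideanSpace ℝ (Fin 2)) : EuclideanSpace ℝ (Fin 3) :=
  !₂[ρ (x 1) * Real.cos (x 0), ρ (x 1) * Real.sin (x 0), x 1]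

/-- The differential of `revolve ρ`, where `ρ'` stands for the derivative of `ρ`. -/
noncomputable def revolveFDeriv (ρ ρ' : ℝ → ℝ) (x : EuclideanSpace ℝ (Fin 2)) :
    EuclideanSpace ℝ (Fin 2) →L[ℝ] EuclideanSpace ℝ (Fin 3) :=
  linearMapOfColumns !₂[-(ρ (x 1) * Real.sin (x 0)), ρ (x 1) * Real.cos (x 0), 0]
    !₂[ρ' (x 1) * Real.cos (x 0), ρ' (x 1) * Real.sin (x 0), 1]

variable {ρ ρ' : ℝ → ℝ} {I : Set ℝ}

theorem measurableSet_angleHeightStrip (hI : MeasurableSet I) :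
    MeasurableSet (angleHeightStrip I) :=
  have hcoord (i : Fin 2) : Measurable fun x : EuclideanSpace ℝ (Fin 2) => x i := by fun_prop
  (hcoord 0 measurableSet_Ioc).inter (hcoord 1 hI)

theorem hasFDerivWithinAt_revolve {x : EuclideanSpace ℝ (Fin 2)}
    (hρ : HasDerivWithinAt ρ (ρ' (x 1)) I (x 1)) :
    HasFDerivWithinAt (revolve ρ) (revolveFDeriv ρ ρ' x) (angleHeightStrip I) x := by
  have hcoord (i : Fin 2) : HasFDerivWithinAt (fun y : EuclideanSpace ℝ (Fin 2) => y i)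
      (EuclideanSpace.proj i : EuclideanSpace ℝ (Fin 2) →L[ℝ] ℝ) (angleHeightStrip I) x :=
    (EuclideanSpace.proj i : EuclideanSpace ℝ (Fin 2) →L[ℝ] ℝ).hasFDerivWithinAt
  have hradius := hρ.comp_hasFDerivWithinAt x (hcoord 1) fun y hy => hy.2
  rw [hasFDerivWithinAt_euclidean]
  intro i
  fin_cases i
  · refine (hradius.mul (hcoord 0).cos).congr_fderiv ?_
    ext v
    simp only [Function.comp_apply, add_apply, smul_apply, PiLp.proj_apply, smul_eq_mul,
      revolveFDeriv, linearMapOfColumns, ContinuousLinearMap.comp_apply,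
      ContinuousLinearMap.smulRight_apply, map_add, map_smul, Fin.zero_eta, Matrix.cons_val_zero]
    ring
  · refine (hradius.mul (hcoord 0).sin).congr_fderiv ?_
    ext v
    simp only [Function.comp_apply, add_apply, smul_apply, PiLp.proj_apply, smul_eq_mul,
      revolveFDeriv, linearMapOfColumns, ContinuousLinearMap.comp_apply,
      ContinuousLinearMap.smulRight_apply, map_add, map_smul, Fin.mk_one,
      Matrix.cons_val_one, Matrix.cons_val_zero]
    ring
  · refine (hcoord 1).congr_fderiv ?_
    ext v
    simp [revolveFDeriv, linearMapOfColumns]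

theorem normDet_revolveFDeriv (ρ ρ' : ℝ → ℝ) (x : EuclideanSpace ℝ (Fin 2)) :
    (revolveFDeriv ρ ρ' x).toLinearMap.normDet = |ρ (x 1)| * √(1 + ρ' (x 1) ^ 2) := by
  rw [← sq_eq_sq₀ (LinearMap.normDet_nonneg _) (by positivity), revolveFDeriv,
    normDet_linearMapOfColumns_sq, mul_pow, sq_abs, Real.sq_sqrt (by positivity)]
  simp only [EuclideanSpace.real_norm_sq_eq, PiLp.inner_apply, Fin.sum_univ_three,
    Matrix.cons_val_zero, Matrix.cons_val_one, Matrix.cons_val, RCLike.inner_apply,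
    Real.ringHom_apply]
  linear_combination ρ (x 1) ^ 2 * (1 + ρ' (x 1) ^ 2 *
    (Real.sin (x 0) ^ 2 + Real.cos (x 0) ^ 2 + 1)) * Real.sin_sq_add_cos_sq (x 0)

theorem injOn_revolve (hρ : ∀ z ∈ I, ρ z ≠ 0) : InjOn (revolve ρ) (angleHeightStrip I) := by
  intro x hx y hy hxy
  have hheight : x 1 = y 1 := congrArg (fun p => p 2) hxy
  have hcos : ρ (x 1) * Real.cos (x 0) = ρ (y 1) * Real.cos (y 0) := congrArg (fun p => p 0) hxy
  have hsin : ρ (x 1) * Real.sin (x 0) = ρ (y 1) * Real.sin (y 0) := congrArg (fun p => p 1) hxy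
  rw [hheight, mul_right_inj' (hρ _ hy.2)] at hcos hsin
  have hangle : x 0 = y 0 := by
    rw [← Real.Angle.toReal_coe_eq_self_iff.2 hx.1, ← Real.Angle.toReal_coe_eq_self_iff.2 hy.1,
      Real.Angle.cos_sin_inj hcos hsin]
  ext i
  fin_cases i
  exacts [hangle, hheight]

theorem exists_mem_Ioc_mul_cos_eq_mul_sin_eq {a b r : ℝ} (h : a ^ 2 + b ^ 2 = r ^ 2) :
    ∃ θ ∈ Ioc (-π) π, r * Real.cos θ = a ∧ r * Real.sin θ = b := by
  have hnorm {u v : ℝ} (huv : u ^ 2 + v ^ 2 = r ^ 2) : ‖(⟨u, v⟩ : ℂ)‖ = |r| := by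
    rw [Complex.norm_def, Complex.normSq_mk, ← sq, ← sq, huv, Real.sqrt_sq_eq_abs]
  rcases abs_choice r with hr | hr
  · have hcos := Complex.norm_mul_cos_arg ⟨a, b⟩
    have hsin := Complex.norm_mul_sin_arg ⟨a, b⟩
    rw [hnorm h, hr] at hcos hsin
    exact ⟨Complex.arg ⟨a, b⟩, Complex.arg_mem_Ioc _, hcos, hsin⟩
  · have hcos := Complex.norm_mul_cos_arg ⟨-a, -b⟩
    have hsin := Complex.norm_mul_sin_arg ⟨-a, -b⟩
    rw [hnorm (by rwa [neg_sq, neg_sq]), hr, neg_mul, neg_inj] at hcos hsin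
    exact ⟨Complex.arg ⟨-a, -b⟩, Complex.arg_mem_Ioc _, hcos, hsin⟩

theorem image_revolve_angleHeightStrip (ρ : ℝ → ℝ) (I : Set ℝ) :
    revolve ρ '' angleHeightStrip I = surfaceOfRevolution ρ I := by
  apply Subset.antisymm
  · rintro _ ⟨x, hx, rfl⟩
    refine ⟨?_, hx.2⟩
    change (ρ (x 1) * Real.cos (x 0)) ^ 2 + (ρ (x 1) * Real.sin (x 0)) ^ 2 = ρ (x 1) ^ 2
    linear_combination ρ (x 1) ^ 2 * Real.sin_sq_add_cos_sq (x 0)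
  · rintro p ⟨hp, hpI⟩
    obtain ⟨θ, hθ, hcos, hsin⟩ := exists_mem_Ioc_mul_cos_eq_mul_sin_eq hp
    refine ⟨!₂[θ, p 2], ⟨hθ, hpI⟩, ?_⟩
    ext i
    fin_cases i
    exacts [hcos, hsin, rfl]

theorem hausdorffMeasure_surfaceOfRevolution {J : ℝ} (hI : MeasurableSet I)
    (hρ : ∀ z ∈ I, HasDerivWithinAt ρ (ρ' z) I z) (hρ0 : ∀ z ∈ I, ρ z ≠ 0)
    (hJ : ∀ z ∈ I, |ρ z| * √(1 + ρ' z ^ 2) = J) :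
    μH[2] (surfaceOfRevolution ρ I) = ENNReal.ofReal J * μH[2] (angleHeightStrip I) := by
  rcases I.eq_empty_or_nonempty with rfl | ⟨z, hz⟩
  · simp [surfaceOfRevolution, angleHeightStrip]
  have hJ0 : J ≠ 0 := hJ z hz ▸ (mul_pos (abs_pos.2 (hρ0 z hz)) (by positivity)).ne'
  have harea := hausdorffMeasure_image_of_normDet_eq (measurableSet_angleHeightStrip hI)
    (fun x hx => hasFDerivWithinAt_revolve (hρ _ hx.2)) (injOn_revolve hρ0) hJ0
    fun x hx => (normDet_revolveFDeriv ρ ρ' x).trans (hJ _ hx.2)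
  rwa [image_revolve_angleHeightStrip, finrank_euclideanSpace_fin, Nat.cast_ofNat] at harea

theorem hausdorffMeasure_surfaceOfRevolution_singleton (ρ : ℝ → ℝ) (z : ℝ) :
    μH[2] (surfaceOfRevolution ρ {z}) = 0 := by
  have hsmooth : ContDiff ℝ 1 fun θ : ℝ =>
      (!₂[ρ z * Real.cos θ, ρ z * Real.sin θ, z] : EuclideanSpace ℝ (Fin 3)) := by
    rw [contDiff_euclidean]
    intro i
    fin_cases i
    · exact contDiff_const.mul Real.contDiff_cos
    · exact contDiff_const.mul Real.contDiff_sin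
    · exact contDiff_const
  have hdim := hsmooth.dimH_range_le
  rw [finrank_self, Nat.cast_one] at hdim
  have hnull := hausdorffMeasure_of_dimH_lt (d := 2) (hdim.trans_lt ENNReal.one_lt_two)
  refine measure_mono_null ?_ hnull
  rintro p ⟨hp, rfl⟩
  obtain ⟨θ, -, hcos, hsin⟩ := exists_mem_Ioc_mul_cos_eq_mul_sin_eq hp
  refine ⟨θ, ?_⟩
  ext i
  fin_cases i
  exacts [hcos, hsin, rfl]

theorem hausdorffMeasure_surfaceOfRevolution_of_countable (ρ : ℝ → ℝ) (hI : I.Countable) :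
    μH[2] (surfaceOfRevolution ρ I) = 0 := by
  have hunion : surfaceOfRevolution ρ I = ⋃ z ∈ I, surfaceOfRevolution ρ {z} := by
    ext p
    simp [surfaceOfRevolution, and_comm]
  rw [hunion, measure_biUnion_null_iff hI]
  exact fun z _ => hausdorffMeasure_surfaceOfRevolution_singleton ρ z

theorem hausdorffMeasure_surfaceOfRevolution_inter_Icc (ρ : ℝ → ℝ) (I : Set ℝ) (a b : ℝ) :
    μH[2] (surfaceOfRevolution ρ (I ∩ Icc a b)) = μH[2] (surfaceOfRevolution ρ (I ∩ Ioo a b)) := by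
  have hends : μH[2] (surfaceOfRevolution ρ {a, b}) = 0 :=
    hausdorffMeasure_surfaceOfRevolution_of_countable ρ (to_countable {a, b})
  have hsub : surfaceOfRevolution ρ (I ∩ Icc a b) ⊆
      surfaceOfRevolution ρ (I ∩ Ioo a b) ∪ surfaceOfRevolution ρ {a, b} := by
    rintro p ⟨hp, hpI, hpab⟩
    rcases eq_endpoints_or_mem_Ioo_of_mem_Icc hpab with h | h | h
    exacts [.inr ⟨hp, .inl h⟩, .inr ⟨hp, .inr h⟩, .inl ⟨hp, hpI, h⟩]
  apply le_antisymm
  · exact (measure_mono hsub).trans ((measure_union_le _ _).trans_eq (by rw [hends, add_zero]))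
  · exact measure_mono fun p hp => ⟨hp.1, hp.2.1, Ioo_subset_Icc_self hp.2.2⟩

end SurfaceOfRevolution

section HatBox

open Set

theorem hausdorffMeasure_surfaceOfRevolution_sphere {I : Set ℝ} (hI : MeasurableSet I)
    (hI1 : I ⊆ Ioo (-1) 1) :
    μH[2] (surfaceOfRevolution (fun z => √(1 - z ^ 2)) I) = μH[2] (angleHeightStrip I) := by
  have hpos : ∀ z ∈ I, 0 < 1 - z ^ 2 := fun z hz => by
    nlinarith [(hI1 hz).1, (hI1 hz).2]
  have hderiv : ∀ z ∈ I,
      HasDerivWithinAt (fun z => √(1 - z ^ 2)) (-z / √(1 - z ^ 2)) I z := fun z hz => by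
    have hsqrt := ((hasDerivAt_pow 2 z).const_sub 1).sqrt (hpos z hz).ne'
    refine hsqrt.hasDerivWithinAt.congr_deriv ?_
    rw [Nat.cast_ofNat, pow_one, ← mul_neg, mul_div_mul_left _ _ two_ne_zero]
  have hjacobian : ∀ z ∈ I, |√(1 - z ^ 2)| * √(1 + (-z / √(1 - z ^ 2)) ^ 2) = 1 := fun z hz => by
    rw [abs_of_nonneg (Real.sqrt_nonneg _), ← Real.sqrt_mul (hpos z hz).le, div_pow,
      Real.sq_sqrt (hpos z hz).le, Real.sqrt_eq_one]
    have := (hpos z hz).ne'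
    field_simp
    ring
  simpa using hausdorffMeasure_surfaceOfRevolution hI hderiv
    (fun z hz => (Real.sqrt_pos.2 (hpos z hz)).ne') hjacobian

theorem hausdorffMeasure_surfaceOfRevolution_cylinder {I : Set ℝ} (hI : MeasurableSet I) :
    μH[2] (surfaceOfRevolution (fun _ => 1) I) = μH[2] (angleHeightStrip I) := by
  simpa using hausdorffMeasure_surfaceOfRevolution (J := 1) hI
    (fun z _ => hasDerivWithinAt_const z I 1) (fun _ _ => one_ne_zero) (by simp)

theorem sphere_zone_eq_surfaceOfRevolution (B : Set ℝ) :
    {p : EuclideanSpace ℝ (Fin 3) | p 0 ^ 2 + p 1 ^ 2 + p 2 ^ 2 = 1 ∧ p 2 ∈ B} =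
      surfaceOfRevolution (fun z => √(1 - z ^ 2)) (B ∩ Icc (-1) 1) := by
  ext p
  constructor
  · rintro ⟨hp, hpB⟩
    have hsq : p 2 ^ 2 ≤ 1 := by linarith [sq_nonneg (p 0), sq_nonneg (p 1)]
    refine ⟨?_, hpB, abs_le.1 ((sq_le_one_iff_abs_le_one _).1 hsq)⟩
    rw [Real.sq_sqrt (sub_nonneg.2 hsq)]
    linarith
  · rintro ⟨hp, hpB, hp1⟩
    rw [Real.sq_sqrt (sub_nonneg.2 ((sq_le_one_iff_abs_le_one _).2 (abs_le.2 hp1)))] at hp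
    exact ⟨by linarith, hpB⟩

theorem cylinder_zone_eq_surfaceOfRevolution (I : Set ℝ) :
    {p : EuclideanSpace ℝ (Fin 3) | p 0 ^ 2 + p 1 ^ 2 = 1 ∧ p 2 ∈ I} =
      surfaceOfRevolution (fun _ => 1) I := by
  simp only [surfaceOfRevolution, one_pow]

end HatBox

theorem archimedes_sphere_eq_cylinder_general {B : Set ℝ} (hB : MeasurableSet B) :
    μH[2] {p : EuclideanSpace ℝ (Fin 3) | p 0 ^ 2 + p 1 ^ 2 + p 2 ^ 2 = 1 ∧ p 2 ∈ B} =
      μH[2] {p : EuclideanSpace ℝ (Fin 3) |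
        p 0 ^ 2 + p 1 ^ 2 = 1 ∧ p 2 ∈ B ∩ Set.Icc (-1 : ℝ) 1} := by
  have hzone : MeasurableSet (B ∩ Set.Ioo (-1) 1) := hB.inter measurableSet_Ioo
  rw [sphere_zone_eq_surfaceOfRevolution, cylinder_zone_eq_surfaceOfRevolution,
    hausdorffMeasure_surfaceOfRevolution_inter_Icc, hausdorffMeasure_surfaceOfRevolution_inter_Icc,
    hausdorffMeasure_surfaceOfRevolution_sphere hzone Set.inter_subset_right,
    hausdorffMeasure_surfaceOfRevolution_cylinder hzone]

/-- **Archimedes** (special case of the Duistermaat–Heckman theorem): the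
2-dimensional Hausdorff measure (surface area) of the unit sphere in `ℝ³`
equals that of the lateral surface of the circumscribed cylinder. -/
theorem archimedes_sphere_eq_cylinder :
    μH[2] {p : EuclideanSpace ℝ (Fin 3) | p 0 ^ 2 + p 1 ^ 2 + p 2 ^ 2 = 1}
      = μH[2] {p : EuclideanSpace ℝ (Fin 3) |
          p 0 ^ 2 + p 1 ^ 2 = 1 ∧ p 2 ∈ Set.Icc (-1 : ℝ) 1} := by
  simpa using archimedes_sphere_eq_cylinder_general MeasurableSet.univ
end
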